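/- Write ζ(t) = ∫₀ᵗ μ̂ₛ(f) ds and, for a probability measure ν on 𝕊, write ν(ζₙ(·,t)) = ∫ ζₙ(y,t) dν(y). Then: (i) if ν has a Lipschitz continuous density, then sup_{t∈[0,1]} |n^{1/2} ν(ζₙ(·,t)) − n^{1/2} 𝔪(ζₙ(·,t))| → 0 as n → ∞ (indeed it is O(n^{−1/2})); (ii) if η > 1/2, then sup_{t∈[0,1]} |n^{1/2} ζ(t) − n^{1/2} 𝔪(ζₙ(·,t))| → 0 as n → ∞; (iii) if ν is an arbitrary absolutely continuous probability measure, then sup_{t∈[0,1]} |ν(ζₙ(·,t)) − ζ(t)| → 0 as n → ∞. -/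

import Mathlib

open MeasureTheory Filter Topology Set UniformConvergence

noncomputable section

instance : Fact ((0:ℝ) < 1) := ⟨zero_lt_one⟩

/-- The circle `𝕊 = ℝ/ℤ`. -/
abbrev Circle1 : Type := AddCircle (1 : ℝ)

/-- A `C²` expanding circle map with expansion `≥ lam` and `‖T''‖_∞ ≤ Astar`,
encoded by a lift `F : ℝ → ℝ` satisfying `F (x+1) = F x + deg`. -/
structure CM (lam Astar : ℝ) where
  F : ℝ → ℝ
  deg : ℤ
  lift_add_one : ∀ x : ℝ, F (x + 1) = F x + deg
  contDiff : ContDiff ℝ 2 F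
  expanding : ∀ x : ℝ, lam ≤ deriv F x
  second_bound : ∀ x : ℝ, |deriv (deriv F) x| ≤ Astar

namespace CM

variable {lam Astar : ℝ}

/-- The induced map on the circle. -/
def toMap (T : CM lam Astar) : Circle1 → Circle1 :=
  fun x => (↑(T.F ((AddCircle.equivIco 1 0 x : ℝ))) : Circle1)

/-- The derivative of `T`, as a function on the circle. -/
def dmap (T : CM lam Astar) : Circle1 → ℝ :=
  fun x => deriv T.F ((AddCircle.equivIco 1 0 x : ℝ))

end CM

/-- The `C¹` distance on the space of maps. -/
def dC1 {lam Astar : ℝ} (T₁ T₂ : CM lam Astar) : ℝ :=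
  (⨆ x : Circle1, dist (T₁.toMap x) (T₂.toMap x)) + (⨆ x : Circle1, |T₁.dmap x - T₂.dmap x|)

/-- The transfer operator `ℒ_T h (x) = ∑_{T y = x} h y / T' y`. -/
def transfer {lam Astar : ℝ} (T : CM lam Astar) (h : Circle1 → ℝ) : Circle1 → ℝ :=
  fun x => ∑' y : {y : Circle1 // T.toMap y = x}, h y / T.dmap y

/-- Iterated transfer operators `ℒ_k ⋯ ℒ_1` of the sequence `T_1, T_2, …` (`Ts i = T_i`). -/
def transferIter {lam Astar : ℝ} (Ts : ℕ → CM lam Astar) : ℕ → (Circle1 → ℝ) → (Circle1 → ℝ)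
  | 0, h => h
  | (k+1), h => transfer (Ts (k+1)) (transferIter Ts k h)

/-- Composition `T_k ∘ ⋯ ∘ T_1` as circle maps. -/
def mapIter {lam Astar : ℝ} (Ts : ℕ → CM lam Astar) : ℕ → Circle1 → Circle1
  | 0 => id
  | (k+1) => (Ts (k+1)).toMap ∘ mapIter Ts k

/-- Composition of the lifts `F_k ∘ ⋯ ∘ F_1`. -/
def liftIter {lam Astar : ℝ} (Ts : ℕ → CM lam Astar) : ℕ → ℝ → ℝ
  | 0 => id
  | (k+1) => (Ts (k+1)).F ∘ liftIter Ts k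

/-- A real representative of `z`. -/
def zrep (z : Circle1) : ℝ := (AddCircle.equivIco 1 0 z : ℝ)

/-- The coordinate on the cut circle `J_z = 𝕊 ∖ {z}`. -/
def arcCoord (z x : Circle1) : ℝ := ((AddCircle.equivIoc 1 (zrep z) x : ℝ))

/-- `|x − y|_z`: the length of the subarc of `J_z` connecting `x` and `y`. -/
def arcDist (z x y : Circle1) : ℝ := |arcCoord z x - arcCoord z y|

/-- `g` is Lipschitz on `J_z = 𝕊 ∖ {z}` with constant `L`. -/
def LipOnArc (z : Circle1) (L : ℝ) (g : Circle1 → ℝ) : Prop :=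
  ∀ x y : Circle1, x ≠ z → y ≠ z → |g x - g y| ≤ L * arcDist z x y

/-- A probability density w.r.t. the Haar–Lebesgue measure `𝔪` on the circle. -/
def IsProbDensity (ψ : Circle1 → ℝ) : Prop :=
  Integrable ψ volume ∧ (∫ x : Circle1, ψ x) = 1 ∧ ∀ x, 0 ≤ ψ x

/-- The class `𝒟_L`: positive probability densities whose logarithm is Lipschitz
with constant `L` on `J_z` for some `z`. -/
def memD (L : ℝ) (ψ : Circle1 → ℝ) : Prop :=
  IsProbDensity ψ ∧ (∀ x, 0 < ψ x) ∧ ∃ z : Circle1, LipOnArc z L (fun x => Real.log (ψ x))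

/-- The `L¹(𝔪)` norm. -/
def l1norm (h : Circle1 → ℝ) : ℝ := ∫ x : Circle1, |h x|

/-- The supremum norm. -/
def supNorm (h : Circle1 → ℝ) : ℝ := ⨆ x : Circle1, |h x|

/-- The Lipschitz constant of `h` (w.r.t. the metric of the circle). -/
def lipConst (h : Circle1 → ℝ) : ℝ :=
  sInf {L : ℝ | 0 ≤ L ∧ ∀ x y : Circle1, |h x - h y| ≤ L * dist x y}

/-- The Lipschitz norm `‖h‖_Lip = Lip(h) + ‖h‖_∞`. -/
def lipNorm (h : Circle1 → ℝ) : ℝ := lipConst h + supNorm h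

/-- `ρ` is the density of the SRB measure of `T`: the density of a `T`-invariant
probability measure equivalent to `𝔪`. -/
def IsSRBDensity {lam Astar : ℝ} (T : CM lam Astar) (ρ : Circle1 → ℝ) : Prop :=
  IsProbDensity ρ ∧ (∀ᵐ x : Circle1, 0 < ρ x) ∧
    Measure.map T.toMap (volume.withDensity (fun x => ENNReal.ofReal (ρ x))) =
      volume.withDensity (fun x => ENNReal.ofReal (ρ x))

section QDS

variable {lam Astar : ℝ}

/-- `x_{n,k} = T_{n,k} ∘ ⋯ ∘ T_{n,1}` for a triangular array. -/
def arrIter (Tarr : ℕ → ℕ → CM lam Astar) (n : ℕ) : ℕ → Circle1 → Circle1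
  | 0 => id
  | (k+1) => (Tarr n (k+1)).toMap ∘ arrIter Tarr n k

/-- `ℒ_{n,k} ⋯ ℒ_{n,1}` for a triangular array. -/
def arrTransfer (Tarr : ℕ → ℕ → CM lam Astar) (n : ℕ) : ℕ → (Circle1 → ℝ) → (Circle1 → ℝ)
  | 0, h => h
  | (k+1), h => transfer (Tarr n (k+1)) (arrTransfer Tarr n k h)

/-- `f_{n,k} = f ∘ T_{n,k} ∘ ⋯ ∘ T_{n,1}` evaluated at `x`. -/
def fnk (Tarr : ℕ → ℕ → CM lam Astar) (f : Circle1 → ℝ) (n k : ℕ) (x : Circle1) : ℝ :=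
  f (arrIter Tarr n k x)

/-- `ζₙ(x,t) = n⁻¹ (∑_{k<⌊nt⌋} f_{n,k}(x) + {nt}·f_{n,⌊nt⌋}(x))`. -/
def zetaP (Tarr : ℕ → ℕ → CM lam Astar) (f : Circle1 → ℝ) (n : ℕ) (x : Circle1) (t : ℝ) : ℝ :=
  (n : ℝ)⁻¹ * ((∑ k ∈ Finset.range ⌊(n : ℝ) * t⌋₊, fnk Tarr f n k x) +
    Int.fract ((n : ℝ) * t) * fnk Tarr f n ⌊(n : ℝ) * t⌋₊ x)

/-- `ξₙ(x,t) = √n ζₙ(x,t) − √n μ(ζₙ(·,t))` for a measure `μ`. -/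
def xiP (Tarr : ℕ → ℕ → CM lam Astar) (f : Circle1 → ℝ) (μ : Measure Circle1) (n : ℕ)
    (x : Circle1) (t : ℝ) : ℝ :=
  Real.sqrt n * zetaP Tarr f n x t - Real.sqrt n * ∫ y, zetaP Tarr f n y t ∂μ

/-- The Hölder continuity (exponent `η`) of the curve `γ` on `[0,1]`, w.r.t. `d_{C¹}`. -/
def HolderCurve (η : ℝ) (γ : ℝ → CM lam Astar) : Prop :=
  ∃ H : ℝ, ∀ s ∈ Icc (0:ℝ) 1, ∀ t ∈ Icc (0:ℝ) 1, dC1 (γ s) (γ t) ≤ H * |s - t| ^ η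

/-- The convergence-rate condition `sup_n n^η sup_t d_{C¹}(T_{n,⌊nt⌋}, γ_t) < ∞`. -/
def ArrayApprox (η : ℝ) (γ : ℝ → CM lam Astar) (Tarr : ℕ → ℕ → CM lam Astar) : Prop :=
  ∃ M : ℝ, ∀ n : ℕ, 1 ≤ n → ∀ t ∈ Icc (0:ℝ) 1,
    (n : ℝ) ^ η * dC1 (Tarr n ⌊(n : ℝ) * t⌋₊) (γ t) ≤ M

end QDS

/-- The path space: functions `[0,1] → ℝ` with the topology of uniform convergence;
continuous paths (with the supremum metric) embed isometrically. -/
abbrev PathSpace : Type := (Icc (0:ℝ) 1) →ᵤ ℝ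

instance : MeasurableSpace PathSpace := borel PathSpace

/-- A function `[0,1] → ℝ` (given as a function on `ℝ`) as a point of the path space. -/
def pathOf (g : ℝ → ℝ) : PathSpace := UniformFun.ofFun (fun t => g t)

/-- Evaluation of a path at time `t` (clamped to `[0,1]`). -/
def evalPath (t : ℝ) (ω : PathSpace) : ℝ := UniformFun.toFun ω (projIcc 0 1 zero_le_one t)


section Extra

variable {lam Astar : ℝ}

/-- `μ(ζₙ(·,t))` for the measure with density `ρ` w.r.t. `𝔪`. -/
def zetaMean (Tarr : ℕ → ℕ → CM lam Astar) (f : Circle1 → ℝ) (ρ : Circle1 → ℝ)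
    (n : ℕ) (t : ℝ) : ℝ :=
  ∫ y : Circle1, zetaP Tarr f n y t * ρ y

/-- `𝔪(ζₙ(·,t))`, the mean w.r.t. the Lebesgue measure. -/
def zetaMeanM (Tarr : ℕ → ℕ → CM lam Astar) (f : Circle1 → ℝ) (n : ℕ) (t : ℝ) : ℝ :=
  ∫ y : Circle1, zetaP Tarr f n y t

/-- `ξₙ(x,t) = √n ζₙ(x,t) − √n μ(ζₙ(·,t))`, where `μ` has density `ρ`. -/
def xiD (Tarr : ℕ → ℕ → CM lam Astar) (f : Circle1 → ℝ) (ρ : Circle1 → ℝ)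
    (n : ℕ) (x : Circle1) (t : ℝ) : ℝ :=
  Real.sqrt n * zetaP Tarr f n x t - Real.sqrt n * zetaMean Tarr f ρ n t

end Extra

/-- The σ-algebra `𝔉_t` on the path space, generated by the evaluations at times `s ∈ [0,t]`. -/
def pathFiltration (t : ℝ) : MeasurableSpace PathSpace :=
  ⨆ (s : ℝ) (_ : 0 ≤ s ∧ s ≤ t), MeasurableSpace.comap (evalPath s) (borel ℝ)

/-- The process `M_t(ω) = A(ω(t)) − A(ω(0)) − ½∫₀ᵗ σ̂ₛ²·A''(ω(s)) ds`. -/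
def MGproc (σ2 : ℝ → ℝ) (A : ℝ → ℝ) (t : ℝ) (ω : PathSpace) : ℝ :=
  A (evalPath t ω) - A (evalPath 0 ω) -
    (1/2) * ∫ s in (0:ℝ)..t, σ2 s * deriv (deriv A) (evalPath s ω)

/-- `P` solves the martingale problem on `C⁰([0,1],ℝ)` for the generator `½σ̂ₜ² d²/dx²`,
started at `0`:  `P` is a probability measure, concentrated on continuous paths starting at `0`,
and for every `A ∈ C_c^∞(ℝ)` the process `MGproc σ2 A` is a `P`-martingale w.r.t. the
natural filtration `𝔉_t`.  -/
def SolvesMartingaleProblem (σ2 : ℝ → ℝ) (P : Measure PathSpace) : Prop :=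
  IsProbabilityMeasure P ∧
  P {ω : PathSpace | evalPath 0 ω = 0} = 1 ∧
  P {ω : PathSpace | Continuous (UniformFun.toFun ω)} = 1 ∧
  ∀ A : ℝ → ℝ, ContDiff ℝ (⊤ : ℕ∞) A → HasCompactSupport A →
    (∀ t ∈ Icc (0:ℝ) 1, Integrable (MGproc σ2 A t) P) ∧
    (∀ t ∈ Icc (0:ℝ) 1, @Measurable PathSpace ℝ (pathFiltration t) _ (MGproc σ2 A t)) ∧
    (∀ s ∈ Icc (0:ℝ) 1, ∀ t ∈ Icc (0:ℝ) 1, s ≤ t →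
      P[MGproc σ2 A t | pathFiltration s] =ᵐ[P] MGproc σ2 A s)

end

/-!
A density that is log-Lipschitz with a suitable constant is mapped by the transfer operator of every
`T ∈ 𝓜` to a density of the same kind, and what has become strictly more regular can be split off:
any two such densities push forward, along any composition, to densities that approach each other
exponentially fast in `L¹`. This memory loss, first for Lipschitz and then by `L¹` approximation for
integrable initial densities, gives the comparison of `ν` with `𝔪`.

For the limit `ζ`, note that `ζₙ(x, t) = ∫₀ᵗ f_{n,⌊ns⌋}(x) ds`, so it suffices to compare
`∫ f_{n,k} d𝔪` with `μ̂ₜ(f)` for `k = ⌊nt⌋`. The last `L = ⌈(log n)²⌉` maps are within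
`O((L / n)^η)` of `γ_t`; replacing them by `γ_t` costs `O(L^{1 + η} n^{-η})`, and memory loss over
these `L` steps costs `O(θ^L)`, which is smaller than any power of `n`.
-/

/-! ### Real analysis -/

theorem exp_mul_sub_one_le {t : ℝ} (ht₀ : 0 ≤ t) (ht₁ : t ≤ 1) (s : ℝ) :
    Real.exp (t * s) - 1 ≤ t * (Real.exp s - 1) := by
  have hconv := convexOn_exp.2 (mem_univ 0) (mem_univ s) (sub_nonneg.2 ht₁) ht₀ (by ring)
  simp only [smul_eq_mul, mul_zero, zero_add, Real.exp_zero, mul_one] at hconv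
  linarith

theorem le_exp_div_mul_of_abs_sub_le {l p q e : ℝ} (hl : 0 < l) (hp : l ≤ p)
    (hpq : |p - q| ≤ e) : q ≤ Real.exp (e / l) * p := by
  have he : 0 ≤ e := (abs_nonneg _).trans hpq
  calc q ≤ p + e := by linarith [neg_abs_le (p - q)]
    _ = p + e / l * l := by rw [div_mul_cancel₀ e hl.ne']
    _ ≤ (e / l + 1) * p := by nlinarith [mul_le_mul_of_nonneg_left hp (div_nonneg he hl.le)]
    _ ≤ Real.exp (e / l) * p := by
      gcongr
      · exact hl.le.trans hp
      · exact Real.add_one_le_exp _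

/-- The average `n⁻¹ ∫₀^{nt} c_⌊s⌋ ds` of a sequence `c` over the time interval `[0, nt]`, written
out as in the definition of `ζₙ`. -/
noncomputable def interpolatedMean (n : ℕ) (c : ℕ → ℝ) (t : ℝ) : ℝ :=
  (n : ℝ)⁻¹ * ((∑ k ∈ Finset.range ⌊(n : ℝ) * t⌋₊, c k) +
    Int.fract ((n : ℝ) * t) * c ⌊(n : ℝ) * t⌋₊)

theorem intervalIntegrable_comp_floor (c : ℕ → ℝ) (a b : ℝ) :
    IntervalIntegrable (fun s => c ⌊s⌋₊) volume a b := by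
  rw [intervalIntegrable_iff]
  refine Measure.integrableOn_of_bounded (M := ∑ k ∈ Finset.range (⌊max a b⌋₊ + 1), |c k|)
    measure_Ioc_lt_top.ne
    (measurable_from_nat.comp Nat.measurable_floor).aestronglyMeasurable ?_
  refine (ae_restrict_iff' measurableSet_uIoc).2 (.of_forall fun s hs => ?_)
  refine Finset.single_le_sum (f := fun k => |c k|) (fun k _ => abs_nonneg _) ?_
  exact Finset.mem_range_succ_iff.2 (Nat.floor_le_floor hs.2)

theorem integral_comp_floor (c : ℕ → ℝ) {x : ℝ} (hx : 0 ≤ x) :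
    ∫ s in (0 : ℝ)..x, c ⌊s⌋₊ = (∑ k ∈ Finset.range ⌊x⌋₊, c k) + Int.fract x * c ⌊x⌋₊ := by
  have hstep : ∀ (k : ℕ) (y : ℝ), k ≤ y → y ≤ k + 1 →
      ∫ s in (k : ℝ)..y, c ⌊s⌋₊ = (y - k) * c k := by
    intro k y hky hyk
    rw [intervalIntegral.integral_congr_Ioo_of_le hky (g := fun _ => c k),
      intervalIntegral.integral_const, smul_eq_mul]
    intro s hs
    have : ⌊s⌋₊ = k := (Nat.floor_eq_iff (k.cast_nonneg.trans hs.1.le)).2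
      ⟨hs.1.le, hs.2.trans_le hyk⟩
    simp only [this]
  have hsum := intervalIntegral.sum_integral_adjacent_intervals (μ := volume)
    (f := fun s => c ⌊s⌋₊) (a := fun k : ℕ => (k : ℝ)) (n := ⌊x⌋₊)
    fun k _ => intervalIntegrable_comp_floor c _ _
  rw [Nat.cast_zero] at hsum
  rw [← intervalIntegral.integral_add_adjacent_intervals (intervalIntegrable_comp_floor c 0 ⌊x⌋₊)
    (intervalIntegrable_comp_floor c _ _), ← hsum, hstep _ _ (Nat.floor_le hx)
    (Nat.lt_floor_add_one x).le]
  congr 1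
  · refine Finset.sum_congr rfl fun k _ => ?_
    rw [hstep k _ (by simp) (by simp)]
    simp
  · rw [← Int.self_sub_floor, natCast_floor_eq_intCast_floor hx]

theorem integral_comp_floor_mul {n : ℕ} (hn : 1 ≤ n) (c : ℕ → ℝ) {t : ℝ} (ht : 0 ≤ t) :
    ∫ s in (0 : ℝ)..t, c ⌊(n : ℝ) * s⌋₊ = interpolatedMean n c t := by
  have hn' : (n : ℝ) ≠ 0 := by positivity
  rw [intervalIntegral.integral_comp_mul_left (fun s => c ⌊s⌋₊) hn', mul_zero,
    integral_comp_floor c (by positivity), smul_eq_mul, interpolatedMean]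

theorem intervalIntegrable_comp_floor_mul (n : ℕ) (c : ℕ → ℝ) (a b : ℝ) :
    IntervalIntegrable (fun s => c ⌊(n : ℝ) * s⌋₊) volume a b := by
  rcases eq_or_ne (n : ℝ) 0 with hn | hn
  · simp [hn]
  · simpa [hn] using (intervalIntegrable_comp_floor c (n * a) (n * b)).comp_mul_left (c := n)

theorem interpolatedMean_one (n : ℕ) (c : ℕ → ℝ) :
    interpolatedMean n c 1 = (n : ℝ)⁻¹ * ∑ k ∈ Finset.range n, c k := by
  simp [interpolatedMean]

theorem abs_integral_sub_interpolatedMean_le {n : ℕ} (hn : 1 ≤ n) {M : ℝ → ℝ}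
    (hM : IntervalIntegrable M volume 0 1) {b c : ℕ → ℝ}
    (hMc : ∀ s ∈ Icc (0 : ℝ) 1, |M s - c ⌊(n : ℝ) * s⌋₊| ≤ b ⌊(n : ℝ) * s⌋₊)
    {t : ℝ} (ht : t ∈ Icc (0 : ℝ) 1) :
    |(∫ s in (0 : ℝ)..t, M s) - interpolatedMean n c t| ≤
      (n : ℝ)⁻¹ * ∑ k ∈ Finset.range n, b k := by
  have hsub : uIcc 0 t ⊆ uIcc (0 : ℝ) 1 := by
    rw [uIcc_of_le ht.1, uIcc_of_le zero_le_one]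
    exact Icc_subset_Icc_right ht.2
  have hc := intervalIntegrable_comp_floor_mul n c 0 t
  have hb := fun x y => intervalIntegrable_comp_floor_mul n b x y
  have hdiff := (hM.mono_set hsub).sub hc
  rw [← integral_comp_floor_mul hn c ht.1, ← intervalIntegral.integral_sub (hM.mono_set hsub) hc]
  calc |∫ s in (0 : ℝ)..t, (M s - c ⌊(n : ℝ) * s⌋₊)|
      ≤ ∫ s in (0 : ℝ)..t, |M s - c ⌊(n : ℝ) * s⌋₊| :=
        intervalIntegral.abs_integral_le_integral_abs ht.1
    _ ≤ ∫ s in (0 : ℝ)..t, b ⌊(n : ℝ) * s⌋₊ :=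
        intervalIntegral.integral_mono_on ht.1 hdiff.abs (hb _ _)
          fun s hs => hMc s ⟨hs.1, hs.2.trans ht.2⟩
    _ ≤ ∫ s in (0 : ℝ)..1, b ⌊(n : ℝ) * s⌋₊ := by
        refine intervalIntegral.integral_mono_interval le_rfl ht.1 ht.2 ?_ (hb _ _)
        refine (ae_restrict_iff' measurableSet_Ioc).2 (.of_forall fun s hs => ?_)
        exact (abs_nonneg _).trans (hMc s ⟨hs.1.le, hs.2⟩)
    _ = (n : ℝ)⁻¹ * ∑ k ∈ Finset.range n, b k := by
        rw [integral_comp_floor_mul hn b zero_le_one, interpolatedMean_one]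

theorem mean_add_mul_pow_le {n : ℕ} (hn : 1 ≤ n) {D θ : ℝ} (hD : 0 ≤ D) (hθ₀ : 0 ≤ θ)
    (hθ₁ : θ < 1) (e : ℝ) :
    (n : ℝ)⁻¹ * ∑ k ∈ Finset.range n, (e + D * θ ^ k) ≤ e + D / (1 - θ) * (n : ℝ)⁻¹ := by
  have : (0 : ℝ) < n := by positivity
  have hgeom : ∑ k ∈ Finset.range n, θ ^ k ≤ (1 - θ)⁻¹ := by
    rw [← tsum_geometric_of_lt_one hθ₀ hθ₁]
    exact (summable_geometric_of_lt_one hθ₀ hθ₁).sum_le_tsum _ fun k _ => by positivity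
  calc (n : ℝ)⁻¹ * ∑ k ∈ Finset.range n, (e + D * θ ^ k)
      = e + D * (∑ k ∈ Finset.range n, θ ^ k) * (n : ℝ)⁻¹ := by
        rw [Finset.sum_add_distrib, ← Finset.mul_sum, Finset.sum_const, Finset.card_range,
          nsmul_eq_mul]
        field_simp
    _ ≤ e + D / (1 - θ) * (n : ℝ)⁻¹ := by
        rw [div_eq_mul_inv]
        gcongr

theorem abs_interpolatedMean_le_of_forall_le {n : ℕ} (hn : 1 ≤ n) {c : ℕ → ℝ} {e D θ : ℝ}
    (hD : 0 ≤ D) (hθ₀ : 0 ≤ θ) (hθ₁ : θ < 1) (hc : ∀ k, |c k| ≤ e + D * θ ^ k)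
    {t : ℝ} (ht : t ∈ Icc (0 : ℝ) 1) :
    |interpolatedMean n c t| ≤ e + D / (1 - θ) * (n : ℝ)⁻¹ := by
  have h := abs_integral_sub_interpolatedMean_le hn (M := fun _ => 0) intervalIntegrable_const
    (b := fun k => e + D * θ ^ k) (c := c) (fun s _ => by simpa using hc _) ht
  rw [intervalIntegral.integral_zero, zero_sub, abs_neg] at h
  exact h.trans (mean_add_mul_pow_le hn hD hθ₀ hθ₁ e)

theorem intervalIntegrable_of_abs_sub_comp_floor_mul_le {M : ℝ → ℝ} {c : ℕ → ℕ → ℝ} {e : ℕ → ℝ}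
    {D θ : ℝ} (hD : 0 ≤ D) (hθ₀ : 0 ≤ θ) (hθ₁ : θ < 1) (he : Tendsto e atTop (𝓝 0))
    (hMc : ∀ n : ℕ, 1 ≤ n → ∀ t ∈ Icc (0 : ℝ) 1,
      |M t - c n ⌊(n : ℝ) * t⌋₊| ≤ e n + D * θ ^ ⌊(n : ℝ) * t⌋₊) :
    IntervalIntegrable M volume 0 1 := by
  have hlim : ∀ t ∈ Ioc (0 : ℝ) 1,
      Tendsto (fun n : ℕ => c n ⌊(n : ℝ) * t⌋₊) atTop (𝓝 (M t)) := by
    intro t ht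
    have hfloor : Tendsto (fun n : ℕ => ⌊(n : ℝ) * t⌋₊) atTop atTop :=
      tendsto_nat_floor_atTop.comp (tendsto_natCast_atTop_atTop.atTop_mul_const ht.1)
    have hbound : Tendsto (fun n : ℕ => e n + D * θ ^ ⌊(n : ℝ) * t⌋₊) atTop (𝓝 0) := by
      simpa using he.add
        (((tendsto_pow_atTop_nhds_zero_of_lt_one hθ₀ hθ₁).comp hfloor).const_mul D)
    refine tendsto_iff_dist_tendsto_zero.2
      (squeeze_zero' (.of_forall fun _ => dist_nonneg) ?_ hbound)
    filter_upwards [eventually_ge_atTop 1] with n hn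
    rw [dist_comm]
    exact hMc n hn t ⟨ht.1.le, ht.2⟩
  have hmeas : AEStronglyMeasurable M (volume.restrict (Ioc 0 1)) :=
    aestronglyMeasurable_of_tendsto_ae atTop
      (fun n => (intervalIntegrable_comp_floor_mul n (c n) 0 1).1.aestronglyMeasurable)
      ((ae_restrict_iff' measurableSet_Ioc).2 (.of_forall hlim))
  have hc₁ := intervalIntegrable_comp_floor_mul 1 (c 1) 0 1
  have hdiff : IntervalIntegrable (fun t => M t - c 1 ⌊((1 : ℕ) : ℝ) * t⌋₊) volume 0 1 := by
    rw [intervalIntegrable_iff_integrableOn_Ioc_of_le zero_le_one]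
    refine Integrable.of_bound (hmeas.sub hc₁.1.aestronglyMeasurable) (e 1 + D)
      ((ae_restrict_iff' measurableSet_Ioc).2 (.of_forall fun t ht => ?_))
    refine (hMc 1 le_rfl t ⟨ht.1.le, ht.2⟩).trans ?_
    gcongr
    exact mul_le_of_le_one_right hD (pow_le_one₀ hθ₀ hθ₁.le)
  simpa using hdiff.add hc₁

theorem tendsto_iSup_abs_of_tendstoUniformlyOn {α : Type*} {s : Set α} {F : ℕ → α → ℝ}
    (hF : TendstoUniformlyOn F 0 atTop s) :
    Tendsto (fun n => ⨆ t : s, |F n t|) atTop (𝓝 0) := by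
  refine Metric.tendsto_nhds.2 fun ε hε => ?_
  filter_upwards [Metric.tendstoUniformlyOn_iff.1 hF (ε / 2) (half_pos hε)] with n hn
  have hle : ⨆ t : s, |F n t| ≤ ε / 2 := Real.iSup_le
    (fun t => by simpa [Real.dist_eq] using (hn t t.2).le) (half_pos hε).le
  rw [Real.dist_0_eq_abs, abs_of_nonneg (Real.iSup_nonneg fun _ => abs_nonneg _)]
  linarith

theorem tendstoUniformlyOn_zero_of_abs_le {α : Type*} {s : Set α} {F : ℕ → α → ℝ} {r : ℕ → ℝ}
    (hr : Tendsto r atTop (𝓝 0)) (hF : ∀ᶠ n in atTop, ∀ t ∈ s, |F n t| ≤ r n) :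
    TendstoUniformlyOn F 0 atTop s := by
  refine Metric.tendstoUniformlyOn_iff.2 fun ε hε => ?_
  filter_upwards [hF, hr.eventually (gt_mem_nhds hε)] with n hn hrn t ht
  simpa [Real.dist_eq] using (hn t ht).trans_lt hrn

theorem tendsto_zero_of_forall_exists_abs_le {ι : Type*} {l : Filter ι} {F r : ι → ℝ}
    (hr : Tendsto r l (𝓝 0))
    (hF : ∀ ε > 0, ∃ C, ∀ᶠ i in l, |F i| ≤ ε + C * r i) : Tendsto F l (𝓝 0) := by
  refine Metric.tendsto_nhds.2 fun ε hε => ?_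
  obtain ⟨C, hC⟩ := hF (ε / 2) (half_pos hε)
  have hCr : Tendsto (fun i => C * r i) l (𝓝 0) := by simpa using hr.const_mul C
  filter_upwards [hC, hCr.eventually (gt_mem_nhds (half_pos hε))] with i hi hri
  rw [Real.dist_eq, sub_zero]
  linarith

theorem tendstoUniformlyOn_rpow_mul_integral_sub_interpolatedMean {M : ℝ → ℝ} {c : ℕ → ℕ → ℝ}
    {e : ℕ → ℝ} {D θ p : ℝ} (hD : 0 ≤ D) (hθ₀ : 0 ≤ θ) (hθ₁ : θ < 1) (hp : p < 1)
    (he : Tendsto e atTop (𝓝 0)) (hep : Tendsto (fun n : ℕ => (n : ℝ) ^ p * e n) atTop (𝓝 0))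
    (hMc : ∀ n : ℕ, 1 ≤ n → ∀ t ∈ Icc (0 : ℝ) 1,
      |M t - c n ⌊(n : ℝ) * t⌋₊| ≤ e n + D * θ ^ ⌊(n : ℝ) * t⌋₊) :
    TendstoUniformlyOn
      (fun (n : ℕ) t => (n : ℝ) ^ p * ((∫ s in (0 : ℝ)..t, M s) - interpolatedMean n (c n) t))
      0 atTop (Icc 0 1) := by
  have hM := intervalIntegrable_of_abs_sub_comp_floor_mul_le hD hθ₀ hθ₁ he hMc
  have hinv : Tendsto (fun n : ℕ => (n : ℝ) ^ p * (n : ℝ)⁻¹) atTop (𝓝 0) := by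
    refine ((tendsto_rpow_neg_atTop (sub_pos.2 hp)).comp tendsto_natCast_atTop_atTop).congr' ?_
    filter_upwards [eventually_gt_atTop 0] with n hn
    rw [Function.comp_apply, neg_sub, Real.rpow_sub_one (Nat.cast_pos.2 hn).ne', div_eq_mul_inv]
  have hbound := hep.add (hinv.const_mul (D / (1 - θ)))
  rw [mul_zero, add_zero] at hbound
  refine tendstoUniformlyOn_zero_of_abs_le hbound ?_
  filter_upwards [eventually_ge_atTop 1] with n hn t ht
  have hn₀ : (0 : ℝ) ≤ (n : ℝ) ^ p := by positivity
  calc |(n : ℝ) ^ p * ((∫ s in (0 : ℝ)..t, M s) - interpolatedMean n (c n) t)|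
      = (n : ℝ) ^ p * |(∫ s in (0 : ℝ)..t, M s) - interpolatedMean n (c n) t| := by
        rw [abs_mul, abs_of_nonneg hn₀]
    _ ≤ (n : ℝ) ^ p * (e n + D / (1 - θ) * (n : ℝ)⁻¹) := by
        gcongr
        exact (abs_integral_sub_interpolatedMean_le hn hM (hMc n hn) ht).trans
          (mean_add_mul_pow_le hn hD hθ₀ hθ₁ (e n))
    _ = (n : ℝ) ^ p * e n + D / (1 - θ) * ((n : ℝ) ^ p * (n : ℝ)⁻¹) := by ring

theorem iSup_abs_sqrt_mul_sub_le {α : Type*} {s : Set α} {F G : α → ℝ} {n : ℕ} {C : ℝ}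
    (hC : 0 ≤ C) (hFG : ∀ t ∈ s, |F t - G t| ≤ C * (n : ℝ)⁻¹) :
    ⨆ t : s, |√n * F t - √n * G t| ≤ C / √n := by
  refine Real.iSup_le (fun t => ?_) (by positivity)
  calc |√n * F t - √n * G t| = √n * |F t - G t| := by
        rw [← mul_sub, abs_mul, abs_of_nonneg (Real.sqrt_nonneg n)]
    _ ≤ √n * (C * (n : ℝ)⁻¹) := by
        gcongr
        exact hFG t t.2
    _ = C / √n := by
        rw [mul_left_comm, ← div_eq_mul_inv, Real.sqrt_div_self, ← div_eq_mul_inv]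

theorem tendsto_const_div_sqrt_natCast (C : ℝ) :
    Tendsto (fun n : ℕ => C / √n) atTop (𝓝 0) :=
  tendsto_const_nhds.div_atTop (Real.tendsto_sqrt_atTop.comp tendsto_natCast_atTop_atTop)

/-- The block length `⌈(log n)²⌉`: long enough for `θ ^ logBlock n` to decay faster than any power
of `n`, yet negligible with respect to any power of `n`. -/
noncomputable def logBlock (n : ℕ) : ℕ := ⌈Real.log n ^ 2⌉₊

theorem tendsto_rpow_mul_pow_logBlock {θ : ℝ} (hθ₀ : 0 < θ) (hθ₁ : θ < 1) (p : ℝ) :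
    Tendsto (fun n : ℕ => (n : ℝ) ^ p * θ ^ logBlock n) atTop (𝓝 0) := by
  have hlog : Tendsto (fun n : ℕ => Real.log n) atTop atTop :=
    Real.tendsto_log_atTop.comp tendsto_natCast_atTop_atTop
  have hexp : Tendsto (fun n : ℕ => Real.exp (Real.log n * (p + Real.log θ * Real.log n)))
      atTop (𝓝 0) := by
    refine Real.tendsto_exp_atBot.comp (hlog.atTop_mul_atBot₀ ?_)
    exact tendsto_atBot_add_const_left _ _ (hlog.const_mul_atTop_of_neg (Real.log_neg hθ₀ hθ₁))
  refine squeeze_zero' (.of_forall fun n => by positivity) ?_ hexp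
  filter_upwards [eventually_ge_atTop 1] with n hn
  have hn' : (0 : ℝ) < n := by positivity
  calc (n : ℝ) ^ p * θ ^ logBlock n = (n : ℝ) ^ p * θ ^ (logBlock n : ℝ) := by
        rw [Real.rpow_natCast]
    _ ≤ (n : ℝ) ^ p * θ ^ (Real.log n ^ 2) := by
        gcongr (n : ℝ) ^ p * ?_
        exact Real.rpow_le_rpow_of_exponent_ge hθ₀ hθ₁.le (Nat.le_ceil _)
    _ = Real.exp (Real.log n * (p + Real.log θ * Real.log n)) := by
        rw [Real.rpow_def_of_pos hn', Real.rpow_def_of_pos hθ₀, ← Real.exp_add]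
        congr 1
        ring

theorem tendsto_logBlock_rpow_mul_rpow_neg {q r : ℝ} (hq : 0 ≤ q) (hr : 0 < r) :
    Tendsto (fun n : ℕ => (logBlock n : ℝ) ^ q * (n : ℝ) ^ (-r)) atTop (𝓝 0) := by
  have hlog : Tendsto (fun n : ℕ => Real.log n) atTop atTop :=
    Real.tendsto_log_atTop.comp tendsto_natCast_atTop_atTop
  have hlittle : Tendsto (fun n : ℕ => 2 ^ q * (Real.log n ^ (2 * q) / (n : ℝ) ^ r))
      atTop (𝓝 0) := by
    simpa using (((isLittleO_log_rpow_rpow_atTop (2 * q) hr).tendsto_div_nhds_zero).comp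
      tendsto_natCast_atTop_atTop).const_mul (2 ^ q)
  refine squeeze_zero' (.of_forall fun n => by positivity) ?_ hlittle
  filter_upwards [hlog.eventually_ge_atTop 1] with n hn
  have hblock : (logBlock n : ℝ) ≤ 2 * Real.log n ^ 2 := by
    have := (Nat.ceil_lt_add_one (sq_nonneg (Real.log n))).le
    change (logBlock n : ℝ) ≤ _ at this
    nlinarith
  calc (logBlock n : ℝ) ^ q * (n : ℝ) ^ (-r)
      ≤ (2 * Real.log n ^ 2) ^ q * (n : ℝ) ^ (-r) := by gcongr
    _ = 2 ^ q * (Real.log n ^ (2 * q) / (n : ℝ) ^ r) := by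
        rw [Real.mul_rpow zero_le_two (sq_nonneg _), Real.rpow_neg n.cast_nonneg,
          Real.rpow_mul (zero_le_one.trans hn), Real.rpow_two]
        ring

/-! ### The circle -/

theorem Circle1.coe_add_intCast (x : ℝ) (m : ℤ) : ((x + m : ℝ) : Circle1) = x := by
  rw [AddCircle.coe_add, (AddCircle.coe_eq_zero_iff (1 : ℝ) (x := m)).2 ⟨m, by simp⟩, add_zero]

theorem Circle1.coe_add_natCast (x : ℝ) (n : ℕ) : ((x + n : ℝ) : Circle1) = x :=
  mod_cast coe_add_intCast x n

theorem Circle1.coe_eq_coe_iff {s t : ℝ} : (s : Circle1) = t ↔ ∃ m : ℤ, s = t + m := by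
  rw [← sub_eq_zero, ← AddCircle.coe_sub, AddCircle.coe_eq_zero_iff]
  simp only [zsmul_eq_mul, mul_one, eq_comm (b := s - t), sub_eq_iff_eq_add']

theorem Circle1.dist_coe_eq (s t : ℝ) : dist (s : Circle1) t = |s - t - round (s - t)| := by
  rw [dist_eq_norm, ← AddCircle.coe_sub, AddCircle.norm_eq]
  simp

theorem Circle1.dist_coe_le (s t : ℝ) : dist (s : Circle1) t ≤ |s - t| := by
  simpa [dist_coe_eq] using round_le (s - t) 0

theorem Circle1.exists_lifts_abs_sub_eq_dist (x y : Circle1) :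
    ∃ s t : ℝ, (s : Circle1) = x ∧ (t : Circle1) = y ∧ |s - t| = dist x y := by
  obtain ⟨s, rfl⟩ := QuotientAddGroup.mk_surjective x
  obtain ⟨t, rfl⟩ := QuotientAddGroup.mk_surjective y
  refine ⟨s, t + round (s - t), rfl, coe_add_intCast t _, ?_⟩
  rw [← sub_sub, ← dist_coe_eq]

theorem Circle1.dist_le_half (x y : Circle1) : dist x y ≤ 1 / 2 := by
  simpa [dist_eq_norm] using AddCircle.norm_le_half_period (1 : ℝ) (x := x - y) one_ne_zero

theorem Circle1.continuous_coe : Continuous fun x : ℝ => (x : Circle1) :=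
  AddCircle.continuous_mk' 1

theorem Circle1.continuous_of_comp_coe {X : Type*} [TopologicalSpace X] {g : Circle1 → X}
    (hg : Continuous fun x : ℝ => g x) : Continuous g :=
  (QuotientAddGroup.isQuotientMap_mk (N := AddSubgroup.zmultiples (1 : ℝ))).continuous_iff.2 hg

theorem Circle1.integral_eq_intervalIntegral (g : Circle1 → ℝ) :
    ∫ x, g x = ∫ s in (0 : ℝ)..1, g s := by
  simpa using (AddCircle.intervalIntegral_preimage 1 0 g).symm

instance Circle1.isProbabilityMeasure_volume : IsProbabilityMeasure (volume : Measure Circle1) :=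
  ⟨by simp⟩

theorem Circle1.integrable_of_continuous {g : Circle1 → ℝ} (hg : Continuous g) : Integrable g :=
  hg.integrable_of_hasCompactSupport (.of_compactSpace g)

theorem l1norm_add_le {g h : Circle1 → ℝ} (hg : Integrable g) (hh : Integrable h) :
    l1norm (g + h) ≤ l1norm g + l1norm h := by
  rw [l1norm, l1norm, l1norm, ← integral_add hg.abs hh.abs]
  exact integral_mono (hg.add hh).abs (hg.abs.add hh.abs) fun x => abs_add_le _ _

theorem l1norm_smul (c : ℝ) (h : Circle1 → ℝ) : l1norm (c • h) = |c| * l1norm h := by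
  simp only [l1norm, Pi.smul_apply, smul_eq_mul, abs_mul, integral_const_mul]

theorem abs_integral_mul_le_mul_l1norm {u g : Circle1 → ℝ} {B : ℝ} (hu : ∀ x, |u x| ≤ B)
    (hg : Integrable g) : |∫ x, u x * g x| ≤ B * l1norm g := by
  rw [l1norm, ← integral_const_mul, ← Real.norm_eq_abs]
  refine norm_integral_le_of_norm_le (hg.abs.const_mul B) (.of_forall fun x => ?_)
  rw [Real.norm_eq_abs, abs_mul]
  exact mul_le_mul_of_nonneg_right (hu x) (abs_nonneg _)

theorem Circle1.integrable_mul {u g : Circle1 → ℝ} (hu : Continuous u) (hg : Integrable g) :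
    Integrable fun x => u x * g x := by
  obtain ⟨B, hB⟩ := isCompact_univ.exists_bound_of_continuousOn hu.continuousOn
  exact hg.bdd_mul hu.aestronglyMeasurable (.of_forall fun x => hB x (mem_univ x))

theorem abs_integral_mul_sub_integral_mul_le {u g h : Circle1 → ℝ} {B : ℝ} (hu : Continuous u)
    (hB : ∀ x, |u x| ≤ B) (hg : Integrable g) (hh : Integrable h) :
    |(∫ x, u x * g x) - ∫ x, u x * h x| ≤ B * l1norm (g - h) := by
  rw [← integral_sub (Circle1.integrable_mul hu hg) (Circle1.integrable_mul hu hh)]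
  simp only [← mul_sub]
  exact abs_integral_mul_le_mul_l1norm hB (hg.sub hh)

/-! ### Lifts of expanding circle maps -/

namespace CM

variable {lam Astar : ℝ}

theorem differentiable_lift (T : CM lam Astar) : Differentiable ℝ T.F :=
  T.contDiff.differentiable two_ne_zero

theorem contDiff_deriv_lift (T : CM lam Astar) : ContDiff ℝ 1 (deriv T.F) :=
  (contDiff_succ_iff_deriv.1 (T.contDiff.of_le (by norm_num : (1 + 1 : WithTop ℕ∞) ≤ 2))).2.2

theorem continuous_deriv_lift (T : CM lam Astar) : Continuous (deriv T.F) :=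
  T.contDiff_deriv_lift.continuous

theorem deriv_lift_pos (hlam : 0 < lam) (T : CM lam Astar) (x : ℝ) : 0 < deriv T.F x :=
  hlam.trans_le (T.expanding x)

theorem abs_deriv_lift_sub_le (T : CM lam Astar) (x y : ℝ) :
    |deriv T.F x - deriv T.F y| ≤ Astar * |x - y| :=
  convex_univ.norm_image_sub_le_of_norm_deriv_le (𝕜 := ℝ)
    (fun _ _ => (T.contDiff_deriv_lift.differentiable one_ne_zero).differentiableAt)
    (fun _ _ => T.second_bound _) (mem_univ y) (mem_univ x)

theorem periodic_deriv_lift (T : CM lam Astar) : Function.Periodic (deriv T.F) 1 := fun x => by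
  rw [← deriv_comp_add_const, funext T.lift_add_one, deriv_add_const]

theorem lift_add_intCast (T : CM lam Astar) (x : ℝ) (m : ℤ) :
    T.F (x + m) = T.F x + m * T.deg := by
  have hper : Function.Periodic (fun y => T.F y - y * T.deg) 1 := fun y => by
    simp only [T.lift_add_one]
    ring
  have h := hper.int_mul m x
  simp only [mul_one] at h
  linarith

theorem mul_sub_le_lift_sub (T : CM lam Astar) {x y : ℝ} (hxy : x ≤ y) :
    lam * (y - x) ≤ T.F y - T.F x :=
  mul_sub_le_image_sub_of_le_deriv T.differentiable_lift T.expanding hxy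

theorem mul_abs_sub_le_abs_lift_sub (T : CM lam Astar) (x y : ℝ) :
    lam * |x - y| ≤ |T.F x - T.F y| := by
  wlog hxy : y ≤ x generalizing x y
  · rw [abs_sub_comm x, abs_sub_comm (T.F x)]
    exact this y x (le_of_not_ge hxy)
  rw [abs_of_nonneg (sub_nonneg.2 hxy)]
  exact (T.mul_sub_le_lift_sub hxy).trans (le_abs_self _)

theorem deg_pos (hlam : 0 < lam) (T : CM lam Astar) : 0 < T.deg := by
  have h := T.mul_sub_le_lift_sub (zero_le_one (α := ℝ))
  have h₁ := T.lift_add_one 0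
  rw [zero_add] at h₁
  exact_mod_cast (show (0 : ℝ) < T.deg by linarith)

theorem cast_toNat_deg (hlam : 0 < lam) (T : CM lam Astar) : (T.deg.toNat : ℝ) = T.deg :=
  mod_cast Int.toNat_of_nonneg (T.deg_pos hlam).le

theorem surjective_lift (hlam : 0 < lam) (T : CM lam Astar) : Function.Surjective T.F := by
  refine T.differentiable_lift.continuous.surjective ?_ ?_
  · refine tendsto_atTop_mono' _ ?_
      (tendsto_atTop_add_const_left _ (T.F 0) (tendsto_id.const_mul_atTop hlam))
    filter_upwards [eventually_ge_atTop 0] with x hx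
    simpa [le_sub_iff_add_le'] using T.mul_sub_le_lift_sub hx
  · refine tendsto_atBot_mono' _ ?_
      (tendsto_atBot_add_const_left _ (T.F 0) (tendsto_id.const_mul_atBot hlam))
    filter_upwards [eventually_le_atBot 0] with x hx
    simpa [le_sub_iff_add_le', add_comm] using T.mul_sub_le_lift_sub hx

/-- The lift of an expanding map as an order automorphism of `ℝ`; its inverse parametrizes the
inverse branches of the circle map. -/
noncomputable def liftIso (hlam : 0 < lam) (T : CM lam Astar) : ℝ ≃o ℝ :=
  StrictMono.orderIsoOfSurjective T.F (strictMono_of_deriv_pos (T.deriv_lift_pos hlam))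
    (T.surjective_lift hlam)

theorem lift_liftIso_symm (hlam : 0 < lam) (T : CM lam Astar) (x : ℝ) :
    T.F ((T.liftIso hlam).symm x) = x :=
  (T.liftIso hlam).apply_symm_apply x

theorem liftIso_symm_lift (hlam : 0 < lam) (T : CM lam Astar) (x : ℝ) :
    (T.liftIso hlam).symm (T.F x) = x :=
  (T.liftIso hlam).symm_apply_apply x

theorem liftIso_symm_add_mul_deg (hlam : 0 < lam) (T : CM lam Astar) (x : ℝ) (m : ℤ) :
    (T.liftIso hlam).symm (x + m * T.deg) = (T.liftIso hlam).symm x + m := by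
  rw [OrderIso.symm_apply_eq]
  exact ((T.lift_add_intCast _ m).trans (by rw [T.lift_liftIso_symm])).symm

theorem toMap_coe (T : CM lam Astar) (x : ℝ) : T.toMap (x : Circle1) = T.F x := by
  rw [toMap, AddCircle.coe_equivIco_mk_apply]
  conv_rhs => rw [← Int.fract_add_floor x, T.lift_add_intCast, ← Int.cast_mul,
    Circle1.coe_add_intCast]
  simp

theorem dmap_coe (T : CM lam Astar) (x : ℝ) : T.dmap (x : Circle1) = deriv T.F x := by
  rw [dmap, AddCircle.coe_equivIco_mk_apply]
  conv_rhs => rw [← Int.fract_add_floor x]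
  simpa using (T.periodic_deriv_lift.int_mul ⌊x⌋ (Int.fract x)).symm

theorem continuous_toMap (T : CM lam Astar) : Continuous T.toMap := by
  refine Circle1.continuous_of_comp_coe ?_
  simp only [toMap_coe]
  exact Circle1.continuous_coe.comp T.differentiable_lift.continuous

theorem continuous_dmap (T : CM lam Astar) : Continuous T.dmap := by
  refine Circle1.continuous_of_comp_coe ?_
  simpa only [dmap_coe] using T.continuous_deriv_lift

/-! ### The `C¹` distance -/

theorem dist_toMap_le_iSup (T₁ T₂ : CM lam Astar) (x : Circle1) :
    dist (T₁.toMap x) (T₂.toMap x) ≤ ⨆ z, dist (T₁.toMap z) (T₂.toMap z) :=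
  le_ciSup (isCompact_range (T₁.continuous_toMap.dist T₂.continuous_toMap)).bddAbove x

theorem abs_dmap_sub_le_iSup (T₁ T₂ : CM lam Astar) (x : Circle1) :
    |T₁.dmap x - T₂.dmap x| ≤ ⨆ z, |T₁.dmap z - T₂.dmap z| :=
  le_ciSup (isCompact_range (T₁.continuous_dmap.sub T₂.continuous_dmap).abs).bddAbove x

theorem dist_toMap_le_dC1 (T₁ T₂ : CM lam Astar) (x : Circle1) :
    dist (T₁.toMap x) (T₂.toMap x) ≤ dC1 T₁ T₂ :=
  (T₁.dist_toMap_le_iSup T₂ x).trans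
    (le_add_of_nonneg_right (Real.iSup_nonneg fun _ => abs_nonneg _))

theorem abs_deriv_lift_sub_le_dC1 (T₁ T₂ : CM lam Astar) (x : ℝ) :
    |deriv T₁.F x - deriv T₂.F x| ≤ dC1 T₁ T₂ := by
  rw [← dmap_coe, ← dmap_coe]
  exact (T₁.abs_dmap_sub_le_iSup T₂ x).trans
    (le_add_of_nonneg_left (Real.iSup_nonneg fun _ => dist_nonneg))

theorem dC1_nonneg (T₁ T₂ : CM lam Astar) : 0 ≤ dC1 T₁ T₂ :=
  dist_nonneg.trans (T₁.dist_toMap_le_dC1 T₂ 0)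

theorem dC1_comm (T₁ T₂ : CM lam Astar) : dC1 T₁ T₂ = dC1 T₂ T₁ := by
  simp only [dC1, dist_comm, abs_sub_comm]

theorem dC1_triangle (T₁ T₂ T₃ : CM lam Astar) : dC1 T₁ T₃ ≤ dC1 T₁ T₂ + dC1 T₂ T₃ := by
  have hdist : ⨆ z, dist (T₁.toMap z) (T₃.toMap z) ≤
      (⨆ z, dist (T₁.toMap z) (T₂.toMap z)) + ⨆ z, dist (T₂.toMap z) (T₃.toMap z) :=
    ciSup_le fun z => (dist_triangle _ (T₂.toMap z) _).trans
      (add_le_add (T₁.dist_toMap_le_iSup T₂ z) (T₂.dist_toMap_le_iSup T₃ z))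
  have hderiv : ⨆ z, |T₁.dmap z - T₃.dmap z| ≤
      (⨆ z, |T₁.dmap z - T₂.dmap z|) + ⨆ z, |T₂.dmap z - T₃.dmap z| :=
    ciSup_le fun z => (abs_sub_le _ (T₂.dmap z) _).trans
      (add_le_add (T₁.abs_dmap_sub_le_iSup T₂ z) (T₂.abs_dmap_sub_le_iSup T₃ z))
  simp only [dC1]
  linarith

theorem abs_lift_sub_lift_sub_le (T₁ T₂ : CM lam Astar) (x y : ℝ) :
    |(T₁.F x - T₂.F x) - (T₁.F y - T₂.F y)| ≤ dC1 T₁ T₂ * |x - y| := by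
  refine convex_univ.norm_image_sub_le_of_norm_hasDerivWithin_le (𝕜 := ℝ)
    (f := fun z => T₁.F z - T₂.F z) (f' := fun z => deriv T₁.F z - deriv T₂.F z)
    (fun z _ => ?_) (fun z _ => T₁.abs_deriv_lift_sub_le_dC1 T₂ z) (mem_univ y) (mem_univ x)
  exact ((T₁.differentiable_lift z).hasDerivAt.sub
    (T₂.differentiable_lift z).hasDerivAt).hasDerivWithinAt

theorem deg_eq_of_dC1_lt_one {T₁ T₂ : CM lam Astar} (h : dC1 T₁ T₂ < 1) : T₁.deg = T₂.deg := by
  have hle := T₁.abs_lift_sub_lift_sub_le T₂ (0 + 1) 0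
  rw [T₁.lift_add_one, T₂.lift_add_one] at hle
  have hlt : |((T₁.deg - T₂.deg : ℤ) : ℝ)| < 1 := by
    refine lt_of_le_of_lt ?_ h
    calc _ = |T₁.F 0 + T₁.deg - (T₂.F 0 + T₂.deg) - (T₁.F 0 - T₂.F 0)| := by
          push_cast
          ring_nf
      _ ≤ _ := by simpa using hle
  exact sub_eq_zero.1 (Int.abs_lt_one_iff.1 (mod_cast hlt))

theorem exists_int_abs_lift_sub_le {T₁ T₂ : CM lam Astar} (h : dC1 T₁ T₂ < 1) :
    ∃ m : ℤ, ∀ x, |T₁.F x - T₂.F x - m| ≤ 2 * dC1 T₁ T₂ := by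
  refine ⟨round (T₁.F 0 - T₂.F 0), fun x => ?_⟩
  have hper : T₁.F x - T₂.F x = T₁.F (Int.fract x) - T₂.F (Int.fract x) := by
    conv_lhs => rw [← Int.fract_add_floor x, lift_add_intCast, lift_add_intCast,
      deg_eq_of_dC1_lt_one h]
    ring
  have hmean : |T₁.F x - T₂.F x - (T₁.F 0 - T₂.F 0)| ≤ dC1 T₁ T₂ := by
    rw [hper]
    refine (T₁.abs_lift_sub_lift_sub_le T₂ (Int.fract x) 0).trans ?_
    refine mul_le_of_le_one_right (T₁.dC1_nonneg T₂) ?_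
    rw [sub_zero, abs_of_nonneg (Int.fract_nonneg x)]
    exact (Int.fract_lt_one x).le
  have hzero : |T₁.F 0 - T₂.F 0 - round (T₁.F 0 - T₂.F 0)| ≤ dC1 T₁ T₂ := by
    rw [← Circle1.dist_coe_eq, ← toMap_coe, ← toMap_coe]
    exact T₁.dist_toMap_le_dC1 T₂ _
  linarith [abs_sub_le (T₁.F x - T₂.F x) (T₁.F 0 - T₂.F 0) (round (T₁.F 0 - T₂.F 0))]

end CM

/-! ### The transfer operator -/

namespace CM

variable {lam Astar : ℝ}

/-- The contribution `h y / T' y` to the transfer operator of the point `y` of the circle that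
lies over the preimage of `z : ℝ` under the lift. -/
noncomputable def branchWeight (hlam : 0 < lam) (T : CM lam Astar) (h : Circle1 → ℝ) (z : ℝ) : ℝ :=
  h ((T.liftIso hlam).symm z) / deriv T.F ((T.liftIso hlam).symm z)

theorem branchWeight_lift (hlam : 0 < lam) (T : CM lam Astar) (h : Circle1 → ℝ) (x : ℝ) :
    T.branchWeight hlam h (T.F x) = h x / deriv T.F x := by
  simp only [branchWeight, liftIso_symm_lift]

theorem periodic_branchWeight (hlam : 0 < lam) (T : CM lam Astar) (h : Circle1 → ℝ) :
    Function.Periodic (T.branchWeight hlam h) T.deg := fun z => by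
  have hsymm := T.liftIso_symm_add_mul_deg hlam z 1
  simp only [Int.cast_one, one_mul] at hsymm
  have hcoe := Circle1.coe_add_intCast ((T.liftIso hlam).symm z) 1
  rw [Int.cast_one] at hcoe
  simp only [branchWeight, hsymm, hcoe, T.periodic_deriv_lift _]

theorem continuous_branchWeight (hlam : 0 < lam) (T : CM lam Astar) {h : Circle1 → ℝ}
    (hh : Continuous h) : Continuous (T.branchWeight hlam h) :=
  (hh.comp (Circle1.continuous_coe.comp (T.liftIso hlam).symm.continuous)).div
    (T.continuous_deriv_lift.comp (T.liftIso hlam).symm.continuous)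
    fun _ => (T.deriv_lift_pos hlam _).ne'

/-- The `i`-th preimage, under the circle map, of the point over `s : ℝ`: it lies over the preimage
of `s + i` under the lift. -/
noncomputable def fiberPoint (hlam : 0 < lam) (T : CM lam Astar) (s : ℝ) (i : Fin T.deg.toNat) :
    {y : Circle1 // T.toMap y = s} :=
  ⟨((T.liftIso hlam).symm (s + (i : ℕ)) : ℝ), by
    rw [toMap_coe, lift_liftIso_symm, Circle1.coe_add_natCast]⟩

theorem bijective_fiberPoint (hlam : 0 < lam) (T : CM lam Astar) (s : ℝ) :
    Function.Bijective (T.fiberPoint hlam s) := by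
  have hdeg : (T.deg.toNat : ℤ) = T.deg := Int.toNat_of_nonneg (T.deg_pos hlam).le
  constructor
  · intro i j hij
    obtain ⟨m, hm⟩ := Circle1.coe_eq_coe_iff.1 (Subtype.ext_iff.1 hij)
    rw [← liftIso_symm_add_mul_deg, (T.liftIso hlam).symm.injective.eq_iff] at hm
    have hmod : (i : ℤ) = j + m * T.deg := by
      have : ((i : ℕ) : ℝ) = (j : ℕ) + m * T.deg := by linarith
      exact_mod_cast this
    have hi := Int.emod_eq_of_lt (Int.natCast_nonneg i) (by omega : (i : ℤ) < T.deg)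
    have hj := Int.emod_eq_of_lt (Int.natCast_nonneg j) (by omega : (j : ℤ) < T.deg)
    rw [hmod, Int.add_mul_emod_self_right, hj] at hi
    exact Fin.ext (by omega)
  · rintro ⟨y, hy⟩
    obtain ⟨z, rfl⟩ := QuotientAddGroup.mk_surjective y
    obtain ⟨k, hk⟩ := Circle1.coe_eq_coe_iff.1 ((T.toMap_coe z).symm.trans hy)
    have hpos := T.deg_pos hlam
    have hlt : (k % T.deg).toNat < T.deg.toNat := by
      have := Int.emod_lt_of_pos k hpos
      have := Int.emod_nonneg k hpos.ne'
      omega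
    refine ⟨⟨(k % T.deg).toNat, hlt⟩, Subtype.ext (Circle1.coe_eq_coe_iff.2 ⟨-(k / T.deg), ?_⟩)⟩
    have hcast : (((k % T.deg).toNat : ℕ) : ℝ) = k + (-(k / T.deg) : ℤ) * T.deg := by
      have : ((k % T.deg).toNat : ℤ) = k + -(k / T.deg) * T.deg := by
        rw [Int.toNat_of_nonneg (Int.emod_nonneg k hpos.ne'), Int.emod_def]
        ring
      exact_mod_cast this
    rw [hcast, ← add_assoc, ← hk, liftIso_symm_add_mul_deg, liftIso_symm_lift]

theorem transfer_coe (hlam : 0 < lam) (T : CM lam Astar) (h : Circle1 → ℝ) (s : ℝ) :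
    transfer T h s = ∑ i ∈ Finset.range T.deg.toNat, T.branchWeight hlam h (s + i) := by
  rw [transfer, ← (Equiv.ofBijective _ (T.bijective_fiberPoint hlam s)).tsum_eq, tsum_fintype,
    Finset.sum_range]
  exact Finset.sum_congr rfl fun i _ => by
    simp only [Equiv.ofBijective_apply, fiberPoint, dmap_coe, branchWeight]

theorem transfer_sub (hlam : 0 < lam) (T : CM lam Astar) (h g : Circle1 → ℝ) :
    transfer T (h - g) = transfer T h - transfer T g := by
  funext x
  obtain ⟨s, rfl⟩ := QuotientAddGroup.mk_surjective x
  simp only [Pi.sub_apply, T.transfer_coe hlam, branchWeight, sub_div, Finset.sum_sub_distrib]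

theorem transfer_smul (hlam : 0 < lam) (T : CM lam Astar) (c : ℝ) (h : Circle1 → ℝ) :
    transfer T (c • h) = c • transfer T h := by
  funext x
  obtain ⟨s, rfl⟩ := QuotientAddGroup.mk_surjective x
  simp only [Pi.smul_apply, T.transfer_coe hlam, branchWeight, smul_eq_mul, mul_div_assoc,
    Finset.mul_sum]

theorem continuous_transfer (hlam : 0 < lam) (T : CM lam Astar) {h : Circle1 → ℝ}
    (hh : Continuous h) : Continuous (transfer T h) := by
  refine Circle1.continuous_of_comp_coe ?_
  simp only [T.transfer_coe hlam]
  exact continuous_finsetSum _ fun i _ =>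
    (T.continuous_branchWeight hlam hh).comp (continuous_add_const (i : ℝ))

theorem abs_transfer_le (hlam : 0 < lam) (T : CM lam Astar) (h : Circle1 → ℝ) (x : Circle1) :
    |transfer T h x| ≤ transfer T (fun y => |h y|) x := by
  obtain ⟨s, rfl⟩ := QuotientAddGroup.mk_surjective x
  simp only [T.transfer_coe hlam]
  refine (Finset.abs_sum_le_sum_abs _ _).trans_eq (Finset.sum_congr rfl fun i _ => ?_)
  simp only [branchWeight, abs_div, abs_of_pos (T.deriv_lift_pos hlam _)]

theorem sum_integral_branchWeight (hlam : 0 < lam) (T : CM lam Astar) {w : ℝ → ℝ}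
    (hw : Continuous w) (hper : Function.Periodic w T.deg) :
    ∑ i ∈ Finset.range T.deg.toNat, ∫ x in (0 : ℝ)..1, w (x + i) =
      ∫ x in (0 : ℝ)..1, w (T.F x) * deriv T.F x := by
  have hunit : ∀ i : ℕ, ∫ x in (0 : ℝ)..1, w (x + i) = ∫ x in (i : ℝ)..(i + 1 : ℕ), w x := by
    intro i
    rw [intervalIntegral.integral_comp_add_right, zero_add, add_comm, Nat.cast_succ]
  have hone : T.F 1 = T.F 0 + T.deg := by simpa using T.lift_add_one 0
  simp only [hunit]
  rw [intervalIntegral.sum_integral_adjacent_intervals (a := fun k : ℕ => (k : ℝ))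
      fun _ _ => hw.intervalIntegrable _ _]
  have hsubst := intervalIntegral.integral_comp_mul_deriv (a := 0) (b := 1) (g := w)
    (fun x _ => (T.differentiable_lift x).hasDerivAt) T.continuous_deriv_lift.continuousOn hw
  simp only [Function.comp_apply] at hsubst
  rw [hsubst, hone, hper.intervalIntegral_add_eq _ 0, zero_add, Nat.cast_zero,
    T.cast_toNat_deg hlam]

theorem integral_comp_toMap_mul (hlam : 0 < lam) (T : CM lam Astar) {u h : Circle1 → ℝ}
    (hu : Continuous u) (hh : Continuous h) :
    ∫ x, u (T.toMap x) * h x = ∫ x, u x * transfer T h x := by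
  set w : ℝ → ℝ := fun z => u z * T.branchWeight hlam h z with hw_def
  have hw : Continuous w :=
    (hu.comp Circle1.continuous_coe).mul (T.continuous_branchWeight hlam hh)
  have hper : Function.Periodic w T.deg := fun z => by
    simp only [hw_def, Circle1.coe_add_intCast, T.periodic_branchWeight hlam h z]
  calc ∫ x, u (T.toMap x) * h x = ∫ x in (0 : ℝ)..1, w (T.F x) * deriv T.F x := by
        rw [Circle1.integral_eq_intervalIntegral]
        refine intervalIntegral.integral_congr fun x _ => ?_
        simp only [hw_def, toMap_coe, branchWeight_lift]
        field_simp [(T.deriv_lift_pos hlam x).ne']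
    _ = ∑ i ∈ Finset.range T.deg.toNat, ∫ x in (0 : ℝ)..1, w (x + i) :=
        (T.sum_integral_branchWeight hlam hw hper).symm
    _ = ∫ x in (0 : ℝ)..1, u x * transfer T h x := by
        simp only [T.transfer_coe hlam, Finset.mul_sum]
        rw [intervalIntegral.integral_finsetSum fun i _ => Continuous.intervalIntegrable ?_ _ _]
        · simp only [hw_def, Circle1.coe_add_natCast]
        · exact (hu.comp Circle1.continuous_coe).mul
            ((T.continuous_branchWeight hlam hh).comp (continuous_add_const (i : ℝ)))
    _ = ∫ x, u x * transfer T h x :=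
        (Circle1.integral_eq_intervalIntegral fun x => u x * transfer T h x).symm

theorem integral_transfer (hlam : 0 < lam) (T : CM lam Astar) {h : Circle1 → ℝ}
    (hh : Continuous h) : ∫ x, transfer T h x = ∫ x, h x := by
  simpa using (T.integral_comp_toMap_mul hlam (u := fun _ => 1) continuous_const hh).symm

theorem l1norm_transfer_le (hlam : 0 < lam) (T : CM lam Astar) {h : Circle1 → ℝ}
    (hh : Continuous h) : l1norm (transfer T h) ≤ l1norm h := by
  rw [l1norm, l1norm, ← T.integral_transfer hlam hh.abs]
  exact integral_mono (Circle1.integrable_of_continuous (T.continuous_transfer hlam hh).abs)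
    (Circle1.integrable_of_continuous (T.continuous_transfer hlam hh.abs))
    fun x => T.abs_transfer_le hlam h x

end CM

/-! ### Compositions -/

section Iter

variable {lam Astar : ℝ}

theorem continuous_mapIter (Ts : ℕ → CM lam Astar) (k : ℕ) : Continuous (mapIter Ts k) := by
  induction k with
  | zero => exact continuous_id
  | succ k ih => exact (Ts (k + 1)).continuous_toMap.comp ih

theorem transferIter_sub (hlam : 0 < lam) (Ts : ℕ → CM lam Astar) (k : ℕ) (h g : Circle1 → ℝ) :
    transferIter Ts k (h - g) = transferIter Ts k h - transferIter Ts k g := by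
  induction k with
  | zero => rfl
  | succ k ih => simp only [transferIter, ih, CM.transfer_sub hlam]

theorem transferIter_smul (hlam : 0 < lam) (Ts : ℕ → CM lam Astar) (k : ℕ) (c : ℝ)
    (h : Circle1 → ℝ) : transferIter Ts k (c • h) = c • transferIter Ts k h := by
  induction k with
  | zero => rfl
  | succ k ih => simp only [transferIter, ih, CM.transfer_smul hlam]

theorem transferIter_add (Ts : ℕ → CM lam Astar) (j k : ℕ) (h : Circle1 → ℝ) :
    transferIter Ts (j + k) h = transferIter (fun i => Ts (j + i)) k (transferIter Ts j h) := by
  induction k with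
  | zero => rfl
  | succ k ih => exact congrArg (transfer (Ts (j + (k + 1)))) ih

theorem continuous_transferIter (hlam : 0 < lam) (Ts : ℕ → CM lam Astar) {h : Circle1 → ℝ}
    (hh : Continuous h) (k : ℕ) : Continuous (transferIter Ts k h) := by
  induction k with
  | zero => exact hh
  | succ k ih => exact (Ts (k + 1)).continuous_transfer hlam ih

theorem integral_comp_mapIter_mul (hlam : 0 < lam) (Ts : ℕ → CM lam Astar) {u h : Circle1 → ℝ}
    (hu : Continuous u) (hh : Continuous h) (k : ℕ) :
    ∫ x, u (mapIter Ts k x) * h x = ∫ x, u x * transferIter Ts k h x := by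
  induction k generalizing u with
  | zero => rfl
  | succ k ih =>
    exact (ih (hu.comp (Ts (k + 1)).continuous_toMap)).trans
      ((Ts (k + 1)).integral_comp_toMap_mul hlam hu (continuous_transferIter hlam Ts hh k))

end Iter

/-! ### Cones of densities -/

/-- A positive function on the circle whose logarithm is Lipschitz with constant `a`; such functions
form a cone. -/
structure IsLogLipschitz (a : ℝ) (h : Circle1 → ℝ) : Prop where
  pos : ∀ x, 0 < h x
  le_exp_mul : ∀ x y, h x ≤ Real.exp (a * dist x y) * h y

/-- A probability density whose logarithm is Lipschitz with constant `a`. -/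
structure IsLogLipDensity (a : ℝ) (h : Circle1 → ℝ) : Prop extends IsLogLipschitz a h where
  integral_eq_one : ∫ x, h x = 1

theorem IsLogLipschitz.mono {a b : ℝ} (hab : a ≤ b) {h : Circle1 → ℝ} (hh : IsLogLipschitz a h) :
    IsLogLipschitz b h where
  pos := hh.pos
  le_exp_mul x y := (hh.le_exp_mul x y).trans <| by
    have := (hh.pos y).le
    gcongr

theorem IsLogLipschitz.continuous {a : ℝ} {h : Circle1 → ℝ} (hh : IsLogLipschitz a h) :
    Continuous h := by
  have hle : ∀ x y, Real.log (h x) ≤ Real.log (h y) + a.toNNReal * dist x y := by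
    intro x y
    have hlog := Real.log_le_log (hh.pos x) (hh.le_exp_mul x y)
    rw [Real.log_mul (Real.exp_ne_zero _) (hh.pos y).ne', Real.log_exp] at hlog
    linarith [mul_le_mul_of_nonneg_right (Real.le_coe_toNNReal a) (dist_nonneg (x := x) (y := y))]
  exact (Real.continuous_exp.comp (LipschitzWith.of_le_add_mul a.toNNReal hle).continuous).congr
    fun x => Real.exp_log (hh.pos x)

theorem IsLogLipDensity.mono {a b : ℝ} (hab : a ≤ b) {h : Circle1 → ℝ}
    (hh : IsLogLipDensity a h) : IsLogLipDensity b h :=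
  ⟨hh.toIsLogLipschitz.mono hab, hh.integral_eq_one⟩

theorem isLogLipDensity_one {a : ℝ} (ha : 0 ≤ a) : IsLogLipDensity a 1 where
  pos _ := one_pos
  le_exp_mul x y := by simpa using mul_nonneg ha dist_nonneg
  integral_eq_one := by simp

theorem IsLogLipDensity.integrable {a : ℝ} {h : Circle1 → ℝ} (hh : IsLogLipDensity a h) :
    Integrable h :=
  Circle1.integrable_of_continuous hh.continuous

theorem IsLogLipDensity.l1norm_eq_one {a : ℝ} {h : Circle1 → ℝ} (hh : IsLogLipDensity a h) :
    l1norm h = 1 := by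
  simp only [l1norm, abs_of_pos (hh.pos _), hh.integral_eq_one]

theorem IsLogLipDensity.exp_neg_le {a : ℝ} (ha : 0 ≤ a) {h : Circle1 → ℝ}
    (hh : IsLogLipDensity a h) (x : Circle1) : Real.exp (-a) ≤ h x := by
  have hle : ∀ y, h y ≤ Real.exp a * h x := fun y => (hh.le_exp_mul y x).trans <| by
    have := (hh.pos x).le
    gcongr
    exact mul_le_of_le_one_right ha ((Circle1.dist_le_half y x).trans (by norm_num))
  have hint := integral_mono hh.integrable (integrable_const (Real.exp a * h x)) hle
  rw [hh.integral_eq_one, integral_const, probReal_univ, one_smul] at hint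
  rwa [Real.exp_neg, inv_le_iff_one_le_mul₀' (Real.exp_pos a)]

theorem IsLogLipDensity.l1norm_sub_le {a b : ℝ} {g h : Circle1 → ℝ} (hg : IsLogLipDensity a g)
    (hh : IsLogLipDensity b h) : l1norm (g - h) ≤ 2 := by
  have hneg : l1norm (-h) = l1norm h := by simp only [l1norm, Pi.neg_apply, abs_neg]
  have hadd := l1norm_add_le hg.integrable hh.integrable.neg
  rw [hneg, hg.l1norm_eq_one, hh.l1norm_eq_one, ← sub_eq_add_neg] at hadd
  linarith

/-- The mass of Lebesgue measure that can be split off from a density in the cone of aperture `a'`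
so that the remainder stays in the wider cone of aperture `a`. -/
noncomputable def doeblinMass (a' a : ℝ) : ℝ := (1 - a' / a) * Real.exp (-a')

theorem doeblinMass_pos {a' a : ℝ} (ha' : 0 < a') (haa : a' < a) : 0 < doeblinMass a' a :=
  mul_pos (sub_pos.2 ((div_lt_one (ha'.trans haa)).2 haa)) (Real.exp_pos _)

theorem doeblinMass_lt_exp_neg {a' a : ℝ} (ha' : 0 < a') (haa : a' < a) :
    doeblinMass a' a < Real.exp (-a') :=
  mul_lt_of_lt_one_left (Real.exp_pos _) (sub_lt_self _ (div_pos ha' (ha'.trans haa)))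

theorem doeblinMass_lt_one {a' a : ℝ} (ha' : 0 < a') (haa : a' < a) : doeblinMass a' a < 1 :=
  (doeblinMass_lt_exp_neg ha' haa).trans_le (Real.exp_le_one_iff.2 (neg_nonpos.2 ha'.le))

theorem IsLogLipDensity.sub_doeblinMass {a' a : ℝ} (ha' : 0 < a') (haa : a' < a)
    {h : Circle1 → ℝ} (hh : IsLogLipDensity a' h) :
    IsLogLipschitz a fun x => h x - doeblinMass a' a where
  pos x := sub_pos.2 ((doeblinMass_lt_exp_neg ha' haa).trans_le (hh.exp_neg_le ha'.le x))
  le_exp_mul x y := by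
    have ha : 0 < a := ha'.trans haa
    have hratio : 0 ≤ 1 - a' / a := sub_nonneg.2 ((div_le_one ha).2 haa.le)
    have hconv := exp_mul_sub_one_le (div_nonneg ha'.le ha.le) ((div_le_one ha).2 haa.le)
      (a * dist x y)
    rw [← mul_assoc, div_mul_cancel₀ a' ha.ne'] at hconv
    have hexp : 0 ≤ Real.exp (a * dist x y) - 1 :=
      sub_nonneg.2 (Real.one_le_exp (mul_nonneg ha.le dist_nonneg))
    have hmass : doeblinMass a' a * (Real.exp (a * dist x y) - 1) ≤
        (Real.exp (a * dist x y) - Real.exp (a' * dist x y)) * h y :=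
      calc doeblinMass a' a * (Real.exp (a * dist x y) - 1)
          = (1 - a' / a) * (Real.exp (a * dist x y) - 1) * Real.exp (-a') := by
            rw [doeblinMass]
            ring
        _ ≤ (1 - a' / a) * (Real.exp (a * dist x y) - 1) * h y := by
            gcongr
            exact hh.exp_neg_le ha'.le y
        _ ≤ (Real.exp (a * dist x y) - Real.exp (a' * dist x y)) * h y := by
            have := (hh.pos y).le
            gcongr
            linarith
    linarith [hh.le_exp_mul x y]

theorem IsLogLipDensity.exists_eq_doeblinMass_add {a' a : ℝ} (ha' : 0 < a') (haa : a' < a)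
    {h : Circle1 → ℝ} (hh : IsLogLipDensity a' h) :
    ∃ g, IsLogLipDensity a g ∧
      ∀ x, h x = doeblinMass a' a + (1 - doeblinMass a' a) * g x := by
  have hmass : 0 < 1 - doeblinMass a' a := sub_pos.2 (doeblinMass_lt_one ha' haa)
  have hsub := hh.sub_doeblinMass ha' haa
  refine ⟨fun x => (h x - doeblinMass a' a) / (1 - doeblinMass a' a),
    ⟨⟨fun x => ?_, fun x y => ?_⟩, ?_⟩, fun x => ?_⟩
  · exact div_pos (hsub.pos x) hmass
  · rw [← mul_div_assoc]
    exact div_le_div_of_nonneg_right (hsub.le_exp_mul x y) hmass.le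
  · rw [integral_div, integral_sub hh.integrable (integrable_const _), hh.integral_eq_one]
    simp [hmass.ne']
  · field_simp
    ring

/-! ### Action of the transfer operator on cones -/

namespace CM

variable {lam Astar : ℝ}

theorem second_bound_nonneg (T : CM lam Astar) : 0 ≤ Astar :=
  (abs_nonneg _).trans (T.second_bound 0)

theorem div_deriv_lift_le (hlam : 0 < lam) (T₁ T₂ : CM lam Astar) {δ : ℝ}
    (hδ : ∀ x, |deriv T₁.F x - deriv T₂.F x| ≤ δ) {a : ℝ} (ha : 0 ≤ a) {h : Circle1 → ℝ}
    (hh : IsLogLipschitz a h) (p q : ℝ) :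
    h p / deriv T₁.F p ≤
      Real.exp ((a + Astar / lam) * |p - q| + δ / lam) * (h q / deriv T₂.F q) := by
  have hp := T₁.deriv_lift_pos hlam p
  have hq := T₂.deriv_lift_pos hlam q
  have hderiv : |deriv T₁.F p - deriv T₂.F q| ≤ Astar * |p - q| + δ := by
    have := abs_sub_le (deriv T₁.F p) (deriv T₂.F p) (deriv T₂.F q)
    linarith [hδ p, T₂.abs_deriv_lift_sub_le p q]
  have hratio := le_exp_div_mul_of_abs_sub_le hlam (T₁.expanding p) hderiv
  have hdens : h p ≤ Real.exp (a * |p - q|) * h q := (hh.le_exp_mul p q).trans <| by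
    have := (hh.pos q).le
    gcongr
    exact Circle1.dist_coe_le p q
  have hsplit : (a + Astar / lam) * |p - q| + δ / lam =
      a * |p - q| + (Astar * |p - q| + δ) / lam := by ring
  rw [hsplit, Real.exp_add, ← mul_div_assoc, div_le_div_iff₀ hp hq]
  calc h p * deriv T₂.F q
      ≤ (Real.exp (a * |p - q|) * h q) *
          (Real.exp ((Astar * |p - q| + δ) / lam) * deriv T₁.F p) :=
        mul_le_mul hdens hratio hq.le ((hh.pos p).le.trans hdens)
    _ = _ := by ring

/-- The `i`-th inverse branch of `T₁` at `s` is paired with the `i`-th inverse branch of `T₂` at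
`t - m`. -/
theorem transfer_coe_le (hlam : 0 < lam) {T₁ T₂ : CM lam Astar} (hdeg : T₁.deg = T₂.deg)
    {m : ℤ} {ε δ : ℝ} (hε : ∀ x, |T₁.F x - T₂.F x - m| ≤ ε)
    (hδ : ∀ x, |deriv T₁.F x - deriv T₂.F x| ≤ δ) {a : ℝ} (ha : 0 ≤ a) {h : Circle1 → ℝ}
    (hh : IsLogLipschitz a h) (s t : ℝ) :
    transfer T₁ h s ≤
      Real.exp ((a + Astar / lam) * ((|s - t| + ε) / lam) + δ / lam) * transfer T₂ h t := by
  have hshift : (t : Circle1) = ((t + (-m : ℤ) : ℝ) : Circle1) :=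
    (Circle1.coe_add_intCast t _).symm
  rw [hshift, T₁.transfer_coe hlam, T₂.transfer_coe hlam, hdeg, Finset.mul_sum]
  refine Finset.sum_le_sum fun i _ => ?_
  set p := (T₁.liftIso hlam).symm (s + i)
  set q := (T₂.liftIso hlam).symm (t + (-m : ℤ) + i) with hq
  have hpq : |p - q| ≤ (|s - t| + ε) / lam := by
    rw [le_div_iff₀' hlam]
    have hFp : T₁.F p = s + i := T₁.lift_liftIso_symm hlam _
    have hFq : T₂.F q = t - m + i := by
      rw [hq, T₂.lift_liftIso_symm hlam]
      push_cast
      ring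
    calc lam * |p - q| ≤ |T₂.F p - T₂.F q| := T₂.mul_abs_sub_le_abs_lift_sub p q
      _ = |(s - t) - (T₁.F p - T₂.F p - m)| := by
          rw [hFp, hFq]
          ring_nf
      _ ≤ |s - t| + ε := (abs_sub _ _).trans (by gcongr; exact hε p)
  have hqpos := (div_pos (hh.pos q) (T₂.deriv_lift_pos hlam q)).le
  refine (T₁.div_deriv_lift_le hlam T₂ hδ ha hh p q).trans ?_
  rw [branchWeight, ← hq]
  have := div_nonneg T₁.second_bound_nonneg hlam.le
  gcongr

theorem isLogLipschitz_transfer (hlam : 0 < lam) (T : CM lam Astar) {a : ℝ} (ha : 0 ≤ a)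
    {h : Circle1 → ℝ} (hh : IsLogLipschitz a h) :
    IsLogLipschitz ((a + Astar / lam) / lam) (transfer T h) where
  pos x := by
    obtain ⟨s, rfl⟩ := QuotientAddGroup.mk_surjective x
    have hdeg := T.deg_pos hlam
    rw [T.transfer_coe hlam]
    exact Finset.sum_pos (fun i _ => div_pos (hh.pos _) (T.deriv_lift_pos hlam _))
      (Finset.nonempty_range_iff.2 (by omega))
  le_exp_mul x y := by
    obtain ⟨s, t, rfl, rfl, hst⟩ := Circle1.exists_lifts_abs_sub_eq_dist x y
    have h := transfer_coe_le hlam (T₁ := T) (T₂ := T) rfl (m := 0) (ε := 0) (δ := 0)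
      (by simp) (by simp) ha hh s t
    rw [hst] at h
    convert h using 3
    ring

theorem isLogLipDensity_transfer (hlam : 0 < lam) (T : CM lam Astar) {a : ℝ} (ha : 0 ≤ a)
    {h : Circle1 → ℝ} (hh : IsLogLipDensity a h) :
    IsLogLipDensity ((a + Astar / lam) / lam) (transfer T h) :=
  ⟨T.isLogLipschitz_transfer hlam ha hh.toIsLogLipschitz,
    (T.integral_transfer hlam hh.continuous).trans hh.integral_eq_one⟩

end CM

/-- An aperture large enough for all transfer operators of the class to map the cone strictly into
itself. -/
noncomputable def coneAperture (lam Astar : ℝ) : ℝ := (Astar + 1) / (lam - 1)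

/-- The aperture of the image of the cone of aperture `coneAperture lam Astar`. -/
noncomputable def imageAperture (lam Astar : ℝ) : ℝ :=
  (coneAperture lam Astar + Astar / lam) / lam

/-- The rate at which the transfer operators of the class contract differences of densities in the
cone. -/
noncomputable def contractionRate (lam Astar : ℝ) : ℝ :=
  1 - doeblinMass (imageAperture lam Astar) (coneAperture lam Astar)

section Constants

variable {lam Astar : ℝ}

theorem coneAperture_pos (hlam : 1 < lam) (hA : 0 ≤ Astar) : 0 < coneAperture lam Astar :=
  div_pos (by linarith) (by linarith)

theorem imageAperture_pos (hlam : 1 < lam) (hA : 0 ≤ Astar) : 0 < imageAperture lam Astar := by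
  have := coneAperture_pos hlam hA
  unfold imageAperture
  positivity

theorem imageAperture_lt_coneAperture (hlam : 1 < lam) (hA : 0 ≤ Astar) :
    imageAperture lam Astar < coneAperture lam Astar := by
  have hlam' : 0 < lam - 1 := sub_pos.2 hlam
  have hcone : (lam - 1) * coneAperture lam Astar = Astar + 1 := mul_div_cancel₀ _ hlam'.ne'
  have hdiv : Astar / lam ≤ Astar := div_le_self hA hlam.le
  rw [imageAperture, div_lt_iff₀ (by linarith)]
  linarith

theorem contractionRate_pos (hlam : 1 < lam) (hA : 0 ≤ Astar) : 0 < contractionRate lam Astar :=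
  sub_pos.2 (doeblinMass_lt_one (imageAperture_pos hlam hA) (imageAperture_lt_coneAperture hlam hA))

theorem contractionRate_lt_one (hlam : 1 < lam) (hA : 0 ≤ Astar) :
    contractionRate lam Astar < 1 :=
  sub_lt_self _ (doeblinMass_pos (imageAperture_pos hlam hA)
    (imageAperture_lt_coneAperture hlam hA))

end Constants

/-! ### Memory loss and perturbation -/

section MemoryLoss

variable {lam Astar : ℝ}

theorem CM.isLogLipDensity_imageAperture_transfer (hlam : 1 < lam) (T : CM lam Astar)
    {h : Circle1 → ℝ} (hh : IsLogLipDensity (coneAperture lam Astar) h) :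
    IsLogLipDensity (imageAperture lam Astar) (transfer T h) :=
  T.isLogLipDensity_transfer (by linarith) (coneAperture_pos hlam T.second_bound_nonneg).le hh

theorem isLogLipDensity_transferIter (hlam : 1 < lam) (Ts : ℕ → CM lam Astar) {h : Circle1 → ℝ}
    (hh : IsLogLipDensity (coneAperture lam Astar) h) (k : ℕ) :
    IsLogLipDensity (coneAperture lam Astar) (transferIter Ts k h) := by
  induction k with
  | zero => exact hh
  | succ k ih =>
    have hA := (Ts 0).second_bound_nonneg
    exact ((Ts (k + 1)).isLogLipDensity_imageAperture_transfer hlam ih).mono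
      (imageAperture_lt_coneAperture hlam hA).le

/-- Each transfer operator produces densities with a common Lebesgue part of mass `1 - θ`, which
cancels in the difference and leaves the factor `θ`. -/
theorem exists_transferIter_sub_eq (hlam : 1 < lam) (Ts : ℕ → CM lam Astar) {g h : Circle1 → ℝ}
    (hg : IsLogLipDensity (coneAperture lam Astar) g)
    (hh : IsLogLipDensity (coneAperture lam Astar) h) (k : ℕ) :
    ∃ g' h', IsLogLipDensity (coneAperture lam Astar) g' ∧
      IsLogLipDensity (coneAperture lam Astar) h' ∧
      transferIter Ts k g - transferIter Ts k h = contractionRate lam Astar ^ k • (g' - h') := by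
  induction k with
  | zero => exact ⟨g, h, hg, hh, by simp [transferIter]⟩
  | succ k ih =>
    obtain ⟨g', h', hg', hh', hgh⟩ := ih
    have hA := (Ts 0).second_bound_nonneg
    have hsplit := fun {f : Circle1 → ℝ} (hf : IsLogLipDensity (coneAperture lam Astar) f) =>
      ((Ts (k + 1)).isLogLipDensity_imageAperture_transfer hlam hf).exists_eq_doeblinMass_add
        (imageAperture_pos hlam hA) (imageAperture_lt_coneAperture hlam hA)
    obtain ⟨g'', hg'', hg_eq⟩ := hsplit hg'
    obtain ⟨h'', hh'', hh_eq⟩ := hsplit hh'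
    refine ⟨g'', h'', hg'', hh'', ?_⟩
    have hlam' : 0 < lam := by linarith
    rw [transferIter, transferIter, ← CM.transfer_sub hlam', hgh, CM.transfer_smul hlam',
      CM.transfer_sub hlam']
    funext x
    simp only [Pi.smul_apply, Pi.sub_apply, smul_eq_mul, hg_eq, hh_eq, contractionRate]
    ring

theorem l1norm_transferIter_sub_le (hlam : 1 < lam) (Ts : ℕ → CM lam Astar) {g h : Circle1 → ℝ}
    (hg : IsLogLipDensity (coneAperture lam Astar) g)
    (hh : IsLogLipDensity (coneAperture lam Astar) h) (k : ℕ) :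
    l1norm (transferIter Ts k g - transferIter Ts k h) ≤ 2 * contractionRate lam Astar ^ k := by
  obtain ⟨g', h', hg', hh', hgh⟩ := exists_transferIter_sub_eq hlam Ts hg hh k
  have hpow : 0 < contractionRate lam Astar ^ k :=
    pow_pos (contractionRate_pos hlam (Ts 0).second_bound_nonneg) k
  rw [hgh, l1norm_smul, abs_of_pos hpow, mul_comm]
  gcongr
  exact hg'.l1norm_sub_le hh'

end MemoryLoss

section Perturbation

variable {lam Astar : ℝ}

/-- The exponent in the comparison of the transfer operators of two maps at `C¹` distance `1`, on
densities in the cone. -/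
noncomputable def comparisonExponent (lam Astar : ℝ) : ℝ :=
  (coneAperture lam Astar + Astar / lam) * (2 / lam) + 1 / lam

theorem transfer_le_exp_mul_transfer (hlam : 1 < lam) {T₁ T₂ : CM lam Astar} (h12 : dC1 T₁ T₂ < 1)
    {h : Circle1 → ℝ} (hh : IsLogLipschitz (coneAperture lam Astar) h) (x : Circle1) :
    transfer T₁ h x ≤ Real.exp (dC1 T₁ T₂ * comparisonExponent lam Astar) * transfer T₂ h x := by
  obtain ⟨s, rfl⟩ := QuotientAddGroup.mk_surjective x
  obtain ⟨m, hm⟩ := CM.exists_int_abs_lift_sub_le h12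
  have hle := CM.transfer_coe_le (by linarith) (CM.deg_eq_of_dC1_lt_one h12) hm
    (T₁.abs_deriv_lift_sub_le_dC1 T₂) (coneAperture_pos hlam T₁.second_bound_nonneg).le hh s s
  convert hle using 3
  rw [comparisonExponent, sub_self, abs_zero]
  ring

/-- The Lipschitz constant, in the `L¹` norm, of `T ↦ ℒ_T h` for densities `h` in the cone. -/
noncomputable def perturbationConst (lam Astar : ℝ) : ℝ :=
  2 * Real.exp (comparisonExponent lam Astar)

theorem perturbationConst_nonneg (lam Astar : ℝ) : 0 ≤ perturbationConst lam Astar :=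
  mul_nonneg zero_le_two (Real.exp_pos _).le

theorem comparisonExponent_nonneg (hlam : 1 < lam) (hA : 0 ≤ Astar) :
    0 ≤ comparisonExponent lam Astar := by
  have := coneAperture_pos hlam hA
  unfold comparisonExponent
  positivity

theorem l1norm_transfer_sub_transfer_le (hlam : 1 < lam) (T₁ T₂ : CM lam Astar) {h : Circle1 → ℝ}
    (hh : IsLogLipDensity (coneAperture lam Astar) h) :
    l1norm (transfer T₁ h - transfer T₂ h) ≤ perturbationConst lam Astar * dC1 T₁ T₂ := by
  set κ := comparisonExponent lam Astar
  have hκ₀ : 0 ≤ κ := comparisonExponent_nonneg hlam T₁.second_bound_nonneg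
  have hdens₁ := T₁.isLogLipDensity_imageAperture_transfer hlam hh
  have hdens₂ := T₂.isLogLipDensity_imageAperture_transfer hlam hh
  rcases le_or_gt 1 (dC1 T₁ T₂) with hfar | hnear
  · have hone := Real.one_le_exp hκ₀
    rw [perturbationConst]
    nlinarith [hdens₁.l1norm_sub_le hdens₂]
  have hpoint : ∀ x, |transfer T₁ h x - transfer T₂ h x| ≤
      (Real.exp (dC1 T₁ T₂ * κ) - 1) * (transfer T₁ h x + transfer T₂ h x) := by
    intro x
    have h12 := transfer_le_exp_mul_transfer hlam hnear hh.toIsLogLipschitz x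
    have h21 := transfer_le_exp_mul_transfer hlam (T₂.dC1_comm T₁ ▸ hnear) hh.toIsLogLipschitz x
    rw [T₂.dC1_comm T₁] at h21
    have hexp : 0 ≤ Real.exp (dC1 T₁ T₂ * κ) - 1 :=
      sub_nonneg.2 (Real.one_le_exp (mul_nonneg (T₁.dC1_nonneg T₂) hκ₀))
    have h₁ := mul_nonneg hexp (hdens₁.pos x).le
    have h₂ := mul_nonneg hexp (hdens₂.pos x).le
    exact abs_sub_le_iff.2 ⟨by linarith, by linarith⟩
  have hsum := hdens₁.integrable.add hdens₂.integrable
  calc l1norm (transfer T₁ h - transfer T₂ h)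
      ≤ ∫ x, (Real.exp (dC1 T₁ T₂ * κ) - 1) * (transfer T₁ h x + transfer T₂ h x) :=
        integral_mono (hdens₁.integrable.sub hdens₂.integrable).abs (hsum.const_mul _) hpoint
    _ = (Real.exp (dC1 T₁ T₂ * κ) - 1) * 2 := by
        rw [integral_const_mul, integral_add hdens₁.integrable hdens₂.integrable,
          hdens₁.integral_eq_one, hdens₂.integral_eq_one, one_add_one_eq_two]
    _ ≤ dC1 T₁ T₂ * (Real.exp κ - 1) * 2 := by
        gcongr
        exact exp_mul_sub_one_le (T₁.dC1_nonneg T₂) hnear.le κ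
    _ ≤ perturbationConst lam Astar * dC1 T₁ T₂ := by
        rw [perturbationConst]
        nlinarith [T₁.dC1_nonneg T₂]

theorem l1norm_transferIter_sub_transferIter_le (hlam : 1 < lam) (Ts Ts' : ℕ → CM lam Astar)
    {h : Circle1 → ℝ} (hh : IsLogLipDensity (coneAperture lam Astar) h) {δ : ℝ} (k : ℕ)
    (hδ : ∀ i ∈ Finset.Icc 1 k, dC1 (Ts i) (Ts' i) ≤ δ) :
    l1norm (transferIter Ts k h - transferIter Ts' k h) ≤
      k * (perturbationConst lam Astar * δ) := by
  induction k with
  | zero => simp [transferIter, l1norm]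
  | succ k ih =>
    have hlam' : 0 < lam := by linarith
    have hdens := isLogLipDensity_transferIter hlam Ts hh k
    have hdens' := isLogLipDensity_transferIter hlam Ts' hh k
    set T := Ts (k + 1)
    set T' := Ts' (k + 1)
    have hind : l1norm (transfer T (transferIter Ts k h - transferIter Ts' k h)) ≤
        k * (perturbationConst lam Astar * δ) :=
      (T.l1norm_transfer_le hlam' (hdens.continuous.sub hdens'.continuous)).trans
        (ih fun i hi => hδ i (Finset.Icc_subset_Icc_right k.le_succ hi))
    have hlast : l1norm (transfer T (transferIter Ts' k h) - transfer T' (transferIter Ts' k h)) ≤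
        perturbationConst lam Astar * δ :=
      (l1norm_transfer_sub_transfer_le hlam T T' hdens').trans
        (mul_le_mul_of_nonneg_left (hδ _ (Finset.right_mem_Icc.2 k.succ_pos))
          (perturbationConst_nonneg lam Astar))
    have htelescope : transferIter Ts (k + 1) h - transferIter Ts' (k + 1) h =
        transfer T (transferIter Ts k h - transferIter Ts' k h) +
          (transfer T (transferIter Ts' k h) - transfer T' (transferIter Ts' k h)) := by
      rw [CM.transfer_sub hlam', sub_add_sub_cancel]
      rfl
    have hcont := T.continuous_transfer hlam' hdens'.continuous
    have hcont' := T'.continuous_transfer hlam' hdens'.continuous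
    rw [htelescope]
    refine (l1norm_add_le (Circle1.integrable_of_continuous (T.continuous_transfer hlam'
      (hdens.continuous.sub hdens'.continuous)))
      (Circle1.integrable_of_continuous (hcont.sub hcont'))).trans ?_
    push_cast
    linarith

end Perturbation

/-! ### Decorrelation -/

section LipschitzApproximation

/-- The algebra of Lipschitz functions on a compact metric space. -/
def lipschitzSubalgebra (X : Type*) [MetricSpace X] [CompactSpace X] : Subalgebra ℝ C(X, ℝ) where
  carrier := {h | ∃ K : NNReal, LipschitzWith K h}
  mul_mem' := by
    rintro g h ⟨K, hK⟩ ⟨L, hL⟩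
    refine ⟨‖g‖₊ * L + K * ‖h‖₊, LipschitzWith.of_dist_le_mul fun x y => ?_⟩
    calc dist ((g * h) x) ((g * h) y)
        = |g x * (h x - h y) + (g x - g y) * h y| := by
          rw [Real.dist_eq, ContinuousMap.mul_apply, ContinuousMap.mul_apply]
          ring_nf
      _ ≤ |g x| * dist (h x) (h y) + dist (g x) (g y) * |h y| := by
          rw [Real.dist_eq, Real.dist_eq, ← abs_mul, ← abs_mul]
          exact abs_add_le _ _
      _ ≤ ‖g‖ * (L * dist x y) + K * dist x y * ‖h‖ := by
          gcongr
          exacts [g.norm_coe_le_norm x, hL.dist_le_mul x y, hK.dist_le_mul x y,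
            h.norm_coe_le_norm y]
      _ = ↑(‖g‖₊ * L + K * ‖h‖₊) * dist x y := by
          push_cast
          ring
  add_mem' := fun ⟨K, hK⟩ ⟨L, hL⟩ => ⟨K + L, hK.add hL⟩
  algebraMap_mem' := fun c => ⟨0, LipschitzWith.const c⟩

theorem exists_lipschitzWith_abs_sub_lt {X : Type*} [MetricSpace X] [CompactSpace X] {h : X → ℝ}
    (hh : Continuous h) {ε : ℝ} (hε : 0 < ε) :
    ∃ (K : NNReal) (ψ : X → ℝ), LipschitzWith K ψ ∧ ∀ x, |ψ x - h x| < ε := by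
  have hsep : (lipschitzSubalgebra X).SeparatesPoints := fun x y hxy =>
    ⟨_, ⟨⟨fun z => dist z y, by fun_prop⟩, ⟨1, LipschitzWith.dist_left y⟩, rfl⟩, by simpa using hxy⟩
  obtain ⟨⟨ψ, K, hK⟩, hψ⟩ :=
    ContinuousMap.exists_mem_subalgebra_near_continuous_of_separatesPoints _ hsep h hh ε hε
  exact ⟨K, ψ, hK, hψ⟩

theorem exists_lipschitzWith_l1norm_sub_le {σ : Circle1 → ℝ} (hσ : Integrable σ) {ε : ℝ}
    (hε : 0 < ε) : ∃ (K : NNReal) (ψ : Circle1 → ℝ), LipschitzWith K ψ ∧ l1norm (σ - ψ) ≤ ε := by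
  obtain ⟨h, -, hσh, hcont, hint⟩ :=
    hσ.exists_hasCompactSupport_integral_sub_le (half_pos hε)
  obtain ⟨K, ψ, hK, hψ⟩ := exists_lipschitzWith_abs_sub_lt hcont (half_pos hε)
  have hψint : Integrable (h - ψ) := hint.sub (Circle1.integrable_of_continuous hK.continuous)
  have hhψ : l1norm (h - ψ) ≤ ε / 2 := by
    have hle := integral_mono hψint.abs (integrable_const (ε / 2))
      fun x => (abs_sub_comm (h x) (ψ x)).trans_le (hψ x).le
    rwa [integral_const, probReal_univ, one_smul] at hle
  refine ⟨K, ψ, hK, ?_⟩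
  rw [← sub_add_sub_cancel σ h ψ]
  refine (l1norm_add_le (hσ.sub hint) hψint).trans ?_
  have hσh' : l1norm (σ - h) ≤ ε / 2 := hσh
  linarith

theorem exists_lipschitzWith_integral_eq_zero_l1norm_sub_le {σ : Circle1 → ℝ} (hσ : Integrable σ)
    (hσ₀ : ∫ x, σ x = 0) {ε : ℝ} (hε : 0 < ε) :
    ∃ (K : NNReal) (φ : Circle1 → ℝ), LipschitzWith K φ ∧ ∫ x, φ x = 0 ∧ l1norm (σ - φ) ≤ ε := by
  obtain ⟨K, ψ, hK, hψ⟩ := exists_lipschitzWith_l1norm_sub_le hσ (half_pos hε)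
  have hψint := Circle1.integrable_of_continuous hK.continuous
  set c := ∫ x, ψ x with hc
  have hcε : |c| ≤ ε / 2 := by
    have hle := (abs_integral_le_integral_abs (f := σ - ψ) (μ := volume)).trans hψ
    rwa [integral_sub' hσ hψint, hσ₀, zero_sub, abs_neg] at hle
  refine ⟨K, fun x => ψ x - c, by simpa using hK.sub (LipschitzWith.const c), ?_, ?_⟩
  · rw [integral_sub hψint (integrable_const c), integral_const, probReal_univ, one_smul, hc,
      sub_self]
  · have hsplit : (σ - fun x => ψ x - c) = (σ - ψ) + fun _ => c := by
      funext x
      simp only [Pi.sub_apply, Pi.add_apply]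
      ring
    have hconst : l1norm (fun _ => c) = |c| := by simp [l1norm]
    rw [hsplit]
    refine (l1norm_add_le (hσ.sub hψint) (integrable_const c)).trans ?_
    linarith

end LipschitzApproximation

section Decorrelation

variable {lam Astar : ℝ}

theorem exists_eq_smul_isLogLipDensity_sub_one {φ : Circle1 → ℝ} {K : NNReal}
    (hφ : LipschitzWith K φ) (hφ₀ : ∫ x, φ x = 0) {a : ℝ} (ha : 0 < a) :
    ∃ (c : ℝ) (g : Circle1 → ℝ), 0 < c ∧ IsLogLipDensity a g ∧ φ = c • (g - 1) := by
  obtain ⟨M, hM⟩ := isCompact_univ.exists_bound_of_continuousOn hφ.continuous.continuousOn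
  have hM₀ : 0 ≤ M := (norm_nonneg _).trans (hM 0 (mem_univ 0))
  set c : ℝ := M + K / a + 1
  have hc : 0 < c := by positivity
  have hlow : ∀ x, K / a + 1 ≤ c + φ x := fun x => by
    linarith [neg_le_of_abs_le (hM x (mem_univ x))]
  have hpos : ∀ x, 0 < c + φ x := fun x => lt_of_lt_of_le (by positivity) (hlow x)
  refine ⟨c, fun x => (c + φ x) / c, hc, ⟨⟨fun x => div_pos (hpos x) hc, fun x y => ?_⟩, ?_⟩, ?_⟩
  · have hK : K ≤ a * (c + φ y) := by
      have := (div_le_iff₀' ha).1 ((lt_add_one _).le.trans (hlow y))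
      linarith
    rw [← mul_div_assoc]
    gcongr
    calc c + φ x ≤ c + φ y + K * dist x y := by linarith [hφ.le_add_mul x y]
      _ ≤ c + φ y + a * (c + φ y) * dist x y := by gcongr
      _ = (a * dist x y + 1) * (c + φ y) := by ring
      _ ≤ Real.exp (a * dist x y) * (c + φ y) := by
          have := (hpos y).le
          gcongr
          exact Real.add_one_le_exp _
  · rw [integral_div, integral_add (integrable_const c)
      (Circle1.integrable_of_continuous hφ.continuous), hφ₀, integral_const, probReal_univ,
      one_smul, add_zero, div_self hc.ne']
  · funext x
    simp only [Pi.smul_apply, Pi.sub_apply, Pi.one_apply, smul_eq_mul]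
    field_simp
    ring

theorem exists_l1norm_transferIter_le (hlam : 1 < lam) (hA : 0 ≤ Astar) {φ : Circle1 → ℝ}
    {K : NNReal} (hφ : LipschitzWith K φ) (hφ₀ : ∫ x, φ x = 0) :
    ∃ C, 0 ≤ C ∧ ∀ (Ts : ℕ → CM lam Astar) (k : ℕ),
      l1norm (transferIter Ts k φ) ≤ C * contractionRate lam Astar ^ k := by
  obtain ⟨c, g, hc, hg, rfl⟩ :=
    exists_eq_smul_isLogLipDensity_sub_one hφ hφ₀ (coneAperture_pos hlam hA)
  refine ⟨c * 2, by positivity, fun Ts k => ?_⟩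
  have hlam' : 0 < lam := by linarith
  rw [transferIter_smul hlam', transferIter_sub hlam', l1norm_smul, abs_of_pos hc, mul_assoc]
  gcongr
  exact l1norm_transferIter_sub_le hlam Ts hg (isLogLipDensity_one (coneAperture_pos hlam hA).le) k

theorem exists_abs_integral_comp_mapIter_mul_le_of_lipschitzWith (hlam : 1 < lam) (hA : 0 ≤ Astar)
    {φ : Circle1 → ℝ} {K : NNReal} (hφ : LipschitzWith K φ) (hφ₀ : ∫ x, φ x = 0) :
    ∃ C, 0 ≤ C ∧ ∀ (Ts : ℕ → CM lam Astar) (k : ℕ) (u : Circle1 → ℝ) (B : ℝ), Continuous u →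
      (∀ x, |u x| ≤ B) →
      |∫ x, u (mapIter Ts k x) * φ x| ≤ B * (C * contractionRate lam Astar ^ k) := by
  obtain ⟨C, hC, hdecay⟩ := exists_l1norm_transferIter_le hlam hA hφ hφ₀
  refine ⟨C, hC, fun Ts k u B hu hB => ?_⟩
  have hlam' : 0 < lam := by linarith
  rw [integral_comp_mapIter_mul hlam' Ts hu hφ.continuous k]
  have hcont := continuous_transferIter hlam' Ts hφ.continuous k
  exact (abs_integral_mul_le_mul_l1norm hB (Circle1.integrable_of_continuous hcont)).trans
    (mul_le_mul_of_nonneg_left (hdecay Ts k) ((abs_nonneg _).trans (hB 0)))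

theorem exists_abs_integral_comp_mapIter_mul_le (hlam : 1 < lam) (hA : 0 ≤ Astar)
    {σ : Circle1 → ℝ} (hσ : Integrable σ) (hσ₀ : ∫ x, σ x = 0) (B : ℝ) {ε : ℝ} (hε : 0 < ε) :
    ∃ C, 0 ≤ C ∧ ∀ (Ts : ℕ → CM lam Astar) (k : ℕ) (u : Circle1 → ℝ), Continuous u →
      (∀ x, |u x| ≤ B) →
      |∫ x, u (mapIter Ts k x) * σ x| ≤ ε + C * contractionRate lam Astar ^ k := by
  have hB₁ : 0 < |B| + 1 := by positivity
  obtain ⟨K, φ, hφ, hφ₀, hσφ⟩ :=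
    exists_lipschitzWith_integral_eq_zero_l1norm_sub_le hσ hσ₀ (div_pos hε hB₁)
  obtain ⟨C, hC, hdecay⟩ :=
    exists_abs_integral_comp_mapIter_mul_le_of_lipschitzWith hlam hA hφ hφ₀
  refine ⟨|B| * C, by positivity, fun Ts k u hu hB => ?_⟩
  have hB₀ : 0 ≤ B := (abs_nonneg _).trans (hB 0)
  have happrox : |(∫ x, u (mapIter Ts k x) * σ x) - ∫ x, u (mapIter Ts k x) * φ x| ≤ ε :=
    calc _ ≤ B * l1norm (σ - φ) :=
          abs_integral_mul_sub_integral_mul_le (hu.comp (continuous_mapIter Ts k))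
            (fun x => hB _) hσ (Circle1.integrable_of_continuous hφ.continuous)
      _ ≤ (|B| + 1) * (ε / (|B| + 1)) := by
          gcongr
          · exact integral_nonneg fun x => abs_nonneg _
          · exact (le_abs_self B).trans (lt_add_one _).le
      _ = ε := mul_div_cancel₀ ε hB₁.ne'
  have htri := abs_sub_le (∫ x, u (mapIter Ts k x) * σ x) (∫ x, u (mapIter Ts k x) * φ x) 0
  rw [sub_zero, sub_zero] at htri
  rw [abs_of_nonneg hB₀, mul_assoc]
  linarith [hdecay Ts k u B hu hB]

theorem integral_mul_sub_integral {u ψ : Circle1 → ℝ} (hu : Continuous u) (hψ : Integrable ψ) :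
    (∫ x, u x * ψ x) - ∫ x, u x = ∫ x, u x * (ψ x - 1) := by
  rw [← integral_sub (Circle1.integrable_mul hu hψ) (Circle1.integrable_of_continuous hu)]
  simp only [mul_sub, mul_one]

theorem IsProbDensity.integral_sub_one {ψ : Circle1 → ℝ} (hψ : IsProbDensity ψ) :
    ∫ x, (ψ x - 1) = 0 := by
  rw [integral_sub hψ.1 (integrable_const 1), hψ.2.1, integral_const, probReal_univ, one_smul,
    sub_self]

end Decorrelation

section SRB

variable {lam Astar : ℝ}

theorem IsSRBDensity.integral_comp_toMap_mul {T : CM lam Astar} {ρ : Circle1 → ℝ}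
    (hρ : IsSRBDensity T ρ) {u : Circle1 → ℝ} (hu : Continuous u) :
    ∫ x, u (T.toMap x) * ρ x = ∫ x, u x * ρ x := by
  obtain ⟨⟨hint, -, hnonneg⟩, -, hinv⟩ := hρ
  have hdens : ∀ v : Circle1 → ℝ,
      ∫ x, v x ∂(volume.withDensity fun x => ENNReal.ofReal (ρ x)) = ∫ x, v x * ρ x := fun v => by
    rw [integral_withDensity_eq_integral_toReal_smul₀ hint.aemeasurable.ennreal_ofReal
      (Eventually.of_forall fun _ => ENNReal.ofReal_lt_top)]
    simp only [ENNReal.toReal_ofReal (hnonneg _), smul_eq_mul, mul_comm]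
  rw [← hdens, ← hdens, ← integral_map T.continuous_toMap.measurable.aemeasurable
    hu.aestronglyMeasurable, hinv]

theorem IsSRBDensity.integral_comp_mapIter_mul {T : CM lam Astar} {ρ : Circle1 → ℝ}
    (hρ : IsSRBDensity T ρ) {u : Circle1 → ℝ} (hu : Continuous u) (k : ℕ) :
    ∫ x, u (mapIter (fun _ => T) k x) * ρ x = ∫ x, u x * ρ x := by
  induction k generalizing u with
  | zero => rfl
  | succ k ih =>
    rw [← hρ.integral_comp_toMap_mul hu]
    exact ih (hu.comp T.continuous_toMap)

theorem IsSRBDensity.tendsto_integral_mul_transferIter (hlam : 1 < lam) {T : CM lam Astar}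
    {ρ : Circle1 → ℝ} (hρ : IsSRBDensity T ρ) {f : Circle1 → ℝ} (hf : Continuous f) :
    Tendsto (fun k => ∫ x, f x * transferIter (fun _ => T) k 1 x) atTop (𝓝 (∫ x, f x * ρ x)) := by
  have hA := T.second_bound_nonneg
  obtain ⟨B, hB⟩ := isCompact_univ.exists_bound_of_continuousOn hf.continuousOn
  have hdiff : ∀ k, (∫ x, f x * ρ x) - ∫ x, f x * transferIter (fun _ => T) k 1 x =
      ∫ x, f (mapIter (fun _ => T) k x) * (ρ x - 1) := fun k => by
    rw [← hρ.integral_comp_mapIter_mul hf k,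
      ← _root_.integral_comp_mapIter_mul (by linarith) _ hf continuous_one k,
      ← integral_mul_sub_integral (u := fun x => f (mapIter _ k x))
        (hf.comp (continuous_mapIter _ k)) hρ.1.1]
    simp only [Pi.one_apply, mul_one]
  have hpow : Tendsto (fun k => contractionRate lam Astar ^ k) atTop (𝓝 0) :=
    tendsto_pow_atTop_nhds_zero_of_lt_one (contractionRate_pos hlam hA).le
      (contractionRate_lt_one hlam hA)
  refine tendsto_sub_nhds_zero_iff.1 (tendsto_zero_of_forall_exists_abs_le hpow fun ε hε => ?_)
  obtain ⟨C, -, hC⟩ := exists_abs_integral_comp_mapIter_mul_le hlam hA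
    (hρ.1.1.sub (integrable_const 1)) hρ.1.integral_sub_one B hε
  refine ⟨C, Eventually.of_forall fun k => ?_⟩
  rw [abs_sub_comm, hdiff k]
  exact hC (fun _ => T) k f hf fun x => hB x (mem_univ x)

theorem IsSRBDensity.abs_integral_mul_transferIter_sub_le (hlam : 1 < lam) {T : CM lam Astar}
    {ρ : Circle1 → ℝ} (hρ : IsSRBDensity T ρ) {f : Circle1 → ℝ} (hf : Continuous f) {B : ℝ}
    (hB : ∀ x, |f x| ≤ B) {h : Circle1 → ℝ} (hh : IsLogLipDensity (coneAperture lam Astar) h)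
    (k : ℕ) :
    |(∫ x, f x * transferIter (fun _ => T) k h x) - ∫ x, f x * ρ x| ≤
      B * (2 * contractionRate lam Astar ^ k) := by
  have hone := isLogLipDensity_one (coneAperture_pos hlam T.second_bound_nonneg).le
  have hlim := (hρ.tendsto_integral_mul_transferIter hlam hf).comp (tendsto_add_atTop_nat k)
  refine le_of_tendsto (tendsto_const_nhds.sub hlim).abs (Eventually.of_forall fun j => ?_)
  have hdens := isLogLipDensity_transferIter hlam (fun _ => T) hh k
  have hj := isLogLipDensity_transferIter hlam (fun _ => T) hone j
  have hjk := isLogLipDensity_transferIter hlam (fun _ => T) hj k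
  rw [Function.comp_apply, transferIter_add]
  exact (abs_integral_mul_sub_integral_mul_le hf hB hdens.integrable hjk.integrable).trans
    (mul_le_mul_of_nonneg_left (l1norm_transferIter_sub_le hlam _ hh hj k)
      ((abs_nonneg _).trans (hB 0)))

/-- Replacing the last `N` maps by `T` gives the second term; iterating `T` alone `N` times on the
density left by the first `j` maps gives the first, by memory loss. -/
theorem IsSRBDensity.abs_integral_mul_transferIter_add_sub_le (hlam : 1 < lam) {T : CM lam Astar}
    {ρ : Circle1 → ℝ} (hρ : IsSRBDensity T ρ) {f : Circle1 → ℝ} (hf : Continuous f) {B : ℝ}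
    (hB : ∀ x, |f x| ≤ B) (Ts : ℕ → CM lam Astar) (j N : ℕ) {δ : ℝ}
    (hδ : ∀ i ∈ Finset.Icc 1 N, dC1 (Ts (j + i)) T ≤ δ) :
    |(∫ x, f x * transferIter Ts (j + N) 1 x) - ∫ x, f x * ρ x| ≤
      B * (2 * contractionRate lam Astar ^ N + N * (perturbationConst lam Astar * δ)) := by
  have hone := isLogLipDensity_one (coneAperture_pos hlam T.second_bound_nonneg).le
  have hj := isLogLipDensity_transferIter hlam Ts hone j
  have hN := isLogLipDensity_transferIter hlam (fun i => Ts (j + i)) hj N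
  have hTN := isLogLipDensity_transferIter hlam (fun _ => T) hj N
  have hstat := hρ.abs_integral_mul_transferIter_sub_le hlam hf hB hj N
  have hpert : |(∫ x, f x * transferIter Ts (j + N) 1 x) -
      ∫ x, f x * transferIter (fun _ => T) N (transferIter Ts j 1) x| ≤
        B * (N * (perturbationConst lam Astar * δ)) := by
    rw [transferIter_add]
    exact (abs_integral_mul_sub_integral_mul_le hf hB hN.integrable hTN.integrable).trans
      (mul_le_mul_of_nonneg_left (l1norm_transferIter_sub_transferIter_le hlam _ _ hj N hδ)
        ((abs_nonneg _).trans (hB 0)))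
  have htri := abs_sub_le (∫ x, f x * transferIter Ts (j + N) 1 x)
    (∫ x, f x * transferIter (fun _ => T) N (transferIter Ts j 1) x) (∫ x, f x * ρ x)
  linarith

end SRB

/-! ### Triangular arrays -/

section Array

variable {lam Astar : ℝ}

theorem arrIter_eq_mapIter (Tarr : ℕ → ℕ → CM lam Astar) (n k : ℕ) :
    arrIter Tarr n k = mapIter (Tarr n) k := by
  induction k with
  | zero => rfl
  | succ k ih => rw [arrIter, mapIter, ih]

theorem fnk_eq (Tarr : ℕ → ℕ → CM lam Astar) (f : Circle1 → ℝ) (n k : ℕ) (x : Circle1) :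
    fnk Tarr f n k x = f (mapIter (Tarr n) k x) := by
  rw [fnk, arrIter_eq_mapIter]

theorem continuous_fnk (Tarr : ℕ → ℕ → CM lam Astar) {f : Circle1 → ℝ} (hf : Continuous f)
    (n k : ℕ) : Continuous (fnk Tarr f n k) := by
  simp only [funext (fnk_eq Tarr f n k)]
  exact hf.comp (continuous_mapIter _ k)

theorem integral_fnk (hlam : 0 < lam) (Tarr : ℕ → ℕ → CM lam Astar) {f : Circle1 → ℝ}
    (hf : Continuous f) (n k : ℕ) :
    ∫ x, fnk Tarr f n k x = ∫ x, f x * transferIter (Tarr n) k 1 x := by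
  rw [← integral_comp_mapIter_mul hlam (Tarr n) hf continuous_one k]
  simp only [fnk_eq, Pi.one_apply, mul_one]

theorem continuous_zetaP (Tarr : ℕ → ℕ → CM lam Astar) {f : Circle1 → ℝ} (hf : Continuous f)
    (n : ℕ) (t : ℝ) : Continuous fun x => zetaP Tarr f n x t :=
  continuous_const.mul ((continuous_finsetSum _ fun k _ => continuous_fnk Tarr hf n k).add
    (continuous_const.mul (continuous_fnk Tarr hf n _)))

theorem integral_zetaP_mul (Tarr : ℕ → ℕ → CM lam Astar) {f : Circle1 → ℝ} (hf : Continuous f)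
    {σ : Circle1 → ℝ} (hσ : Integrable σ) (n : ℕ) (t : ℝ) :
    ∫ x, zetaP Tarr f n x t * σ x =
      interpolatedMean n (fun k => ∫ x, fnk Tarr f n k x * σ x) t := by
  have hint := fun k => Circle1.integrable_mul (continuous_fnk Tarr hf n k) hσ
  simp only [zetaP, mul_assoc, add_mul, Finset.sum_mul]
  rw [integral_const_mul, integral_add (integrable_finsetSum _ fun k _ => hint k)
    ((hint _).const_mul _), integral_finsetSum _ fun k _ => hint k, integral_const_mul,
    interpolatedMean]

theorem isProbDensity_toReal_rnDeriv {ν : Measure Circle1} [IsProbabilityMeasure ν]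
    (hν : ν ≪ volume) : IsProbDensity fun x => (ν.rnDeriv volume x).toReal :=
  ⟨Measure.integrable_toReal_rnDeriv, by simp [Measure.integral_toReal_rnDeriv hν],
    fun _ => ENNReal.toReal_nonneg⟩

theorem integral_zetaP_eq_zetaMean (Tarr : ℕ → ℕ → CM lam Astar)
    (f : Circle1 → ℝ) {ν : Measure Circle1} [IsProbabilityMeasure ν] (hν : ν ≪ volume) (n : ℕ)
    (t : ℝ) :
    ∫ x, zetaP Tarr f n x t ∂ν =
      zetaMean Tarr f (fun x => (ν.rnDeriv volume x).toReal) n t := by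
  rw [← integral_rnDeriv_smul hν, zetaMean]
  simp only [smul_eq_mul, mul_comm]

theorem zetaMeanM_eq_interpolatedMean (Tarr : ℕ → ℕ → CM lam Astar) {f : Circle1 → ℝ}
    (hf : Continuous f) (n : ℕ) (t : ℝ) :
    zetaMeanM Tarr f n t = interpolatedMean n (fun k => ∫ x, fnk Tarr f n k x) t := by
  simpa only [mul_one, zetaMeanM] using integral_zetaP_mul Tarr hf (integrable_const 1) n t

theorem zetaMean_sub_zetaMeanM (Tarr : ℕ → ℕ → CM lam Astar) {f : Circle1 → ℝ}
    (hf : Continuous f) {ψ : Circle1 → ℝ} (hψ : Integrable ψ) (n : ℕ) (t : ℝ) :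
    zetaMean Tarr f ψ n t - zetaMeanM Tarr f n t =
      interpolatedMean n (fun k => ∫ x, fnk Tarr f n k x * (ψ x - 1)) t := by
  exact (integral_mul_sub_integral (continuous_zetaP Tarr hf n t) hψ).trans
    (integral_zetaP_mul Tarr hf (hψ.sub (integrable_const 1)) n t)

theorem exists_abs_zetaMean_sub_zetaMeanM_le_of_lipschitzWith (hlam : 1 < lam) (hA : 0 ≤ Astar)
    (Tarr : ℕ → ℕ → CM lam Astar) {f : Circle1 → ℝ} (hf : Continuous f) {ψ : Circle1 → ℝ}
    (hψ : IsProbDensity ψ) {K : NNReal} (hψK : LipschitzWith K ψ) :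
    ∃ C, 0 ≤ C ∧ ∀ n : ℕ, 1 ≤ n → ∀ t ∈ Icc (0 : ℝ) 1,
      |zetaMean Tarr f ψ n t - zetaMeanM Tarr f n t| ≤ C * (n : ℝ)⁻¹ := by
  obtain ⟨B, hB⟩ := isCompact_univ.exists_bound_of_continuousOn hf.continuousOn
  have hB₀ : 0 ≤ B := (norm_nonneg _).trans (hB 0 (mem_univ 0))
  obtain ⟨C, hC, hdecay⟩ := exists_abs_integral_comp_mapIter_mul_le_of_lipschitzWith hlam hA
    (hψK.sub (LipschitzWith.const 1)) hψ.integral_sub_one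
  have hθ₀ := (contractionRate_pos hlam hA).le
  have hθ₁ := contractionRate_lt_one hlam hA
  have := sub_nonneg.2 hθ₁.le
  refine ⟨B * C / (1 - contractionRate lam Astar), by positivity, fun n hn t ht => ?_⟩
  rw [zetaMean_sub_zetaMeanM Tarr hf hψ.1, ← zero_add (_ / _ * _)]
  refine abs_interpolatedMean_le_of_forall_le hn (by positivity) hθ₀ hθ₁ (fun k => ?_) ht
  simp only [fnk_eq, zero_add, mul_assoc]
  exact hdecay (Tarr n) k f B hf fun x => hB x (mem_univ x)

theorem exists_abs_zetaMean_sub_zetaMeanM_le (hlam : 1 < lam) (hA : 0 ≤ Astar)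
    (Tarr : ℕ → ℕ → CM lam Astar) {f : Circle1 → ℝ} (hf : Continuous f) {ψ : Circle1 → ℝ}
    (hψ : IsProbDensity ψ) {ε : ℝ} (hε : 0 < ε) :
    ∃ C, ∀ n : ℕ, 1 ≤ n → ∀ t ∈ Icc (0 : ℝ) 1,
      |zetaMean Tarr f ψ n t - zetaMeanM Tarr f n t| ≤ ε + C * (n : ℝ)⁻¹ := by
  obtain ⟨B, hB⟩ := isCompact_univ.exists_bound_of_continuousOn hf.continuousOn
  obtain ⟨C, hC, hdecay⟩ := exists_abs_integral_comp_mapIter_mul_le hlam hA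
    (hψ.1.sub (integrable_const 1)) hψ.integral_sub_one B hε
  refine ⟨C / (1 - contractionRate lam Astar), fun n hn t ht => ?_⟩
  rw [zetaMean_sub_zetaMeanM Tarr hf hψ.1]
  refine abs_interpolatedMean_le_of_forall_le hn hC (contractionRate_pos hlam hA).le
    (contractionRate_lt_one hlam hA) (fun k => ?_) ht
  simp only [fnk_eq]
  exact hdecay (Tarr n) k f hf fun x => hB x (mem_univ x)

theorem tendstoUniformlyOn_zetaMean_sub_zetaMeanM (hlam : 1 < lam) (hA : 0 ≤ Astar)
    (Tarr : ℕ → ℕ → CM lam Astar) {f : Circle1 → ℝ} (hf : Continuous f) {ψ : Circle1 → ℝ}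
    (hψ : IsProbDensity ψ) :
    TendstoUniformlyOn (fun n t => zetaMean Tarr f ψ n t - zetaMeanM Tarr f n t) 0 atTop
      (Icc 0 1) := by
  have hinv : Tendsto (fun i : ℕ × ℝ => (i.1 : ℝ)⁻¹) (atTop ×ˢ 𝓟 (Icc 0 1)) (𝓝 0) :=
    tendsto_inv_atTop_nhds_zero_nat.comp tendsto_fst
  refine tendsto_prod_principal_iff.1 (tendsto_zero_of_forall_exists_abs_le hinv fun ε hε => ?_)
  obtain ⟨C, hC⟩ := exists_abs_zetaMean_sub_zetaMeanM_le hlam hA Tarr hf hψ hε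
  refine ⟨C, eventually_prod_principal_iff.2 ?_⟩
  filter_upwards [eventually_ge_atTop 1] with n hn t ht using hC n hn t ht

end Array

/-! ### Comparison with the quasi-static limit -/

section QuasiStatic

variable {lam Astar : ℝ}

theorem exists_dC1_array_le {η : ℝ} (hη : 0 ≤ η) {γ : ℝ → CM lam Astar} (hγ : HolderCurve η γ)
    {Tarr : ℕ → ℕ → CM lam Astar} (hT : ArrayApprox η γ Tarr) :
    ∃ C, 0 ≤ C ∧ ∀ n : ℕ, 1 ≤ n → ∀ t ∈ Icc (0 : ℝ) 1, ∀ N m : ℕ,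
      m ≤ ⌊(n : ℝ) * t⌋₊ → ⌊(n : ℝ) * t⌋₊ < m + N →
      dC1 (Tarr n m) (γ t) ≤ C * ((N : ℝ) ^ η * (n : ℝ) ^ (-η)) := by
  obtain ⟨H, hH⟩ := hγ
  obtain ⟨M, hM⟩ := hT
  refine ⟨|M| + |H|, by positivity, fun n hn t ht N m hm hmN => ?_⟩
  have hn₀ : (0 : ℝ) < n := by positivity
  have hN : (1 : ℝ) ≤ N := by exact_mod_cast (by omega : 1 ≤ N)
  have hmt : (m : ℝ) ≤ n * t := (Nat.le_floor_iff (by have := ht.1; positivity)).1 hm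
  have htm : n * t < m + N := (Nat.floor_lt' (by omega)).1 hmN |>.trans_eq (Nat.cast_add m N)
  set s : ℝ := m / n
  have hns : n * s = m := mul_div_cancel₀ _ hn₀.ne'
  have hst : s ≤ t := (div_le_iff₀' hn₀).2 hmt
  have hs : s ∈ Icc (0 : ℝ) 1 := ⟨by positivity, hst.trans ht.2⟩
  have harray : dC1 (Tarr n m) (γ s) ≤ |M| * ((N : ℝ) ^ η * (n : ℝ) ^ (-η)) := by
    have h := hM n hn s hs
    rw [hns, Nat.floor_natCast] at h
    calc dC1 (Tarr n m) (γ s) = n ^ η * dC1 (Tarr n m) (γ s) * (n : ℝ) ^ (-η) := by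
          rw [Real.rpow_neg hn₀.le]
          field_simp
      _ ≤ |M| * (1 * (n : ℝ) ^ (-η)) := by
          rw [one_mul]
          gcongr
          exact h.trans (le_abs_self M)
      _ ≤ |M| * ((N : ℝ) ^ η * (n : ℝ) ^ (-η)) := by
          gcongr
          exact Real.one_le_rpow hN hη
  have hcurve : dC1 (γ s) (γ t) ≤ |H| * ((N : ℝ) ^ η * (n : ℝ) ^ (-η)) := by
    have hdist : |s - t| ≤ N / n := by
      rw [abs_sub_comm, abs_of_nonneg (sub_nonneg.2 hst), le_div_iff₀' hn₀, mul_sub, hns]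
      linarith
    rw [Real.rpow_neg hn₀.le, ← div_eq_mul_inv, ← Real.div_rpow N.cast_nonneg hn₀.le]
    refine (hH s hs t ht).trans ?_
    gcongr
    exact le_abs_self H
  linarith [CM.dC1_triangle (Tarr n m) (γ s) (γ t)]

theorem exists_abs_integral_fnk_sub_le (hlam : 1 < lam) {η : ℝ} (hη : 0 ≤ η)
    {γ : ℝ → CM lam Astar} (hγ : HolderCurve η γ) {Tarr : ℕ → ℕ → CM lam Astar}
    (hT : ArrayApprox η γ Tarr) {f : Circle1 → ℝ} (hf : Continuous f) {B : ℝ}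
    (hB : ∀ x, |f x| ≤ B) {ρhat : ℝ → Circle1 → ℝ}
    (hρhat : ∀ t ∈ Icc (0 : ℝ) 1, IsSRBDensity (γ t) (ρhat t)) :
    ∃ C, ∀ n : ℕ, 1 ≤ n → ∀ t ∈ Icc (0 : ℝ) 1, ∀ L : ℕ,
      |(∫ x, f x * ρhat t x) - ∫ x, fnk Tarr f n ⌊(n : ℝ) * t⌋₊ x| ≤
        2 * B * contractionRate lam Astar ^ L + C * ((L : ℝ) ^ (1 + η) * (n : ℝ) ^ (-η)) +
          2 * B * contractionRate lam Astar ^ ⌊(n : ℝ) * t⌋₊ := by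
  have hA := (γ 0).second_bound_nonneg
  have hB₀ : 0 ≤ B := (abs_nonneg _).trans (hB 0)
  have hP := perturbationConst_nonneg lam Astar
  obtain ⟨C, hC, hdist⟩ := exists_dC1_array_le hη hγ hT
  refine ⟨B * (perturbationConst lam Astar * C), fun n hn t ht L => ?_⟩
  set k := ⌊(n : ℝ) * t⌋₊
  set θ := contractionRate lam Astar
  have hθ : 0 < θ := contractionRate_pos hlam hA
  have hmin : θ ^ min L k ≤ θ ^ L + θ ^ k := by
    rcases min_choice L k with h | h <;> rw [h] <;> linarith [pow_pos hθ L, pow_pos hθ k]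
  have hblock := (hρhat t ht).abs_integral_mul_transferIter_add_sub_le hlam hf hB (Tarr n)
    (k - min L k) (min L k) (δ := C * ((L : ℝ) ^ η * (n : ℝ) ^ (-η))) fun i hi => by
      rw [Finset.mem_Icc] at hi
      exact hdist n hn t ht L _ (by omega) (by omega)
  rw [Nat.sub_add_cancel (min_le_right L k), ← integral_fnk (by linarith) Tarr hf,
    abs_sub_comm] at hblock
  calc _ ≤ B * (2 * θ ^ min L k +
        (min L k : ℕ) * (perturbationConst lam Astar * (C * ((L : ℝ) ^ η * (n : ℝ) ^ (-η))))) :=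
        hblock
    _ ≤ B * (2 * (θ ^ L + θ ^ k) +
        L * (perturbationConst lam Astar * (C * ((L : ℝ) ^ η * (n : ℝ) ^ (-η))))) := by
        gcongr
        exact min_le_left L k
    _ = _ := by
        rw [Real.rpow_one_add' L.cast_nonneg (by positivity)]
        ring

theorem tendstoUniformlyOn_rpow_mul_integral_sub_zetaMeanM (hlam : 1 < lam) {η : ℝ} (hη : 0 < η)
    {γ : ℝ → CM lam Astar} (hγ : HolderCurve η γ) {Tarr : ℕ → ℕ → CM lam Astar}
    (hT : ArrayApprox η γ Tarr) {f : Circle1 → ℝ} (hf : Continuous f) {ρhat : ℝ → Circle1 → ℝ}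
    (hρhat : ∀ t ∈ Icc (0 : ℝ) 1, IsSRBDensity (γ t) (ρhat t)) {p : ℝ} (hpη : p < η)
    (hp₁ : p < 1) :
    TendstoUniformlyOn (fun (n : ℕ) t => (n : ℝ) ^ p *
      ((∫ s in (0 : ℝ)..t, ∫ y, f y * ρhat s y) - zetaMeanM Tarr f n t)) 0 atTop (Icc 0 1) := by
  have hA := (γ 0).second_bound_nonneg
  obtain ⟨B, hB⟩ := isCompact_univ.exists_bound_of_continuousOn hf.continuousOn
  have hB₀ : 0 ≤ B := (norm_nonneg _).trans (hB 0 (mem_univ 0))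
  obtain ⟨C, hC⟩ :=
    exists_abs_integral_fnk_sub_le hlam hη.le hγ hT hf (fun x => hB x (mem_univ x)) hρhat
  set θ := contractionRate lam Astar
  have hθ₀ : 0 < θ := contractionRate_pos hlam hA
  have hθ₁ : θ < 1 := contractionRate_lt_one hlam hA
  have he : ∀ q < η, Tendsto (fun n : ℕ => (n : ℝ) ^ q * (2 * B * θ ^ logBlock n +
      C * ((logBlock n : ℝ) ^ (1 + η) * (n : ℝ) ^ (-η)))) atTop (𝓝 0) := fun q hq => by
    have hlim := ((tendsto_rpow_mul_pow_logBlock hθ₀ hθ₁ q).const_mul (2 * B)).add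
      ((tendsto_logBlock_rpow_mul_rpow_neg (q := 1 + η) (by positivity)
        (sub_pos.2 hq)).const_mul C)
    simp only [mul_zero, add_zero] at hlim
    refine hlim.congr' ?_
    filter_upwards [eventually_gt_atTop 0] with n hn
    rw [neg_sub, sub_eq_add_neg, Real.rpow_add (Nat.cast_pos.2 hn)]
    ring
  simp only [zetaMeanM_eq_interpolatedMean Tarr hf]
  exact tendstoUniformlyOn_rpow_mul_integral_sub_interpolatedMean (by positivity) hθ₀.le hθ₁ hp₁
    (by simpa only [Real.rpow_zero, one_mul] using he 0 hη) (he p hpη)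
    (c := fun n k => ∫ x, fnk Tarr f n k x) fun n hn t ht => hC n hn t ht (logBlock n)

theorem tendstoUniformlyOn_zetaMean_sub_integral (hlam : 1 < lam) {η : ℝ} (hη : 0 < η)
    {γ : ℝ → CM lam Astar} (hγ : HolderCurve η γ) {Tarr : ℕ → ℕ → CM lam Astar}
    (hT : ArrayApprox η γ Tarr) {f : Circle1 → ℝ} (hf : Continuous f) {ρhat : ℝ → Circle1 → ℝ}
    (hρhat : ∀ t ∈ Icc (0 : ℝ) 1, IsSRBDensity (γ t) (ρhat t)) {ψ : Circle1 → ℝ}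
    (hψ : IsProbDensity ψ) :
    TendstoUniformlyOn
      (fun n t => zetaMean Tarr f ψ n t - ∫ s in (0 : ℝ)..t, ∫ y, f y * ρhat s y) 0 atTop
      (Icc 0 1) := by
  have hlim := (tendstoUniformlyOn_zetaMean_sub_zetaMeanM hlam (γ 0).second_bound_nonneg Tarr hf
    hψ).sub (tendstoUniformlyOn_rpow_mul_integral_sub_zetaMeanM hlam hη hγ hT hf hρhat hη one_pos)
  rw [sub_zero] at hlim
  refine hlim.congr (.of_forall fun n t _ => ?_)
  simp only [Pi.sub_apply, Real.rpow_zero, one_mul, sub_sub_sub_cancel_right]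

end QuasiStatic

theorem statement17_general {lam Astar : ℝ} (hlam : 1 < lam) {η : ℝ} (hη : 0 < η)
    {γ : ℝ → CM lam Astar} (hγ : HolderCurve η γ)
    {Tarr : ℕ → ℕ → CM lam Astar} (hT : ArrayApprox η γ Tarr)
    {f : Circle1 → ℝ} (hf : Continuous f)
    {ρhat : ℝ → Circle1 → ℝ} (hρhat : ∀ t ∈ Icc (0 : ℝ) 1, IsSRBDensity (γ t) (ρhat t)) :
    (∀ ψ : Circle1 → ℝ, IsProbDensity ψ → (∃ K : NNReal, LipschitzWith K ψ) →
      (∃ C : ℝ, 0 < C ∧ ∀ n : ℕ, 1 ≤ n →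
        (⨆ t : Icc (0 : ℝ) 1, |√n * zetaMean Tarr f ψ n t - √n * zetaMeanM Tarr f n t|) ≤
          C / √n) ∧
      Tendsto (fun n : ℕ => ⨆ t : Icc (0 : ℝ) 1,
          |√n * zetaMean Tarr f ψ n t - √n * zetaMeanM Tarr f n t|) atTop (𝓝 0)) ∧
    (1 / 2 < η →
      Tendsto (fun n : ℕ => ⨆ t : Icc (0 : ℝ) 1,
          |√n * (∫ s in (0 : ℝ)..t, ∫ y, f y * ρhat s y) - √n * zetaMeanM Tarr f n t|)
        atTop (𝓝 0)) ∧
    (∀ ν : Measure Circle1, IsProbabilityMeasure ν → ν ≪ volume →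
      Tendsto (fun n : ℕ => ⨆ t : Icc (0 : ℝ) 1,
          |(∫ y, zetaP Tarr f n y t ∂ν) - ∫ s in (0 : ℝ)..t, ∫ y, f y * ρhat s y|)
        atTop (𝓝 0)) := by
  have hA := (γ 0).second_bound_nonneg
  refine ⟨fun ψ hψ ⟨K, hψK⟩ => ?_, fun hη₂ => ?_, fun ν _ hν => ?_⟩
  · obtain ⟨C, hC, hle⟩ :=
      exists_abs_zetaMean_sub_zetaMeanM_le_of_lipschitzWith hlam hA Tarr hf hψ hψK
    have hsup := fun n hn => iSup_abs_sqrt_mul_sub_le hC (hle n hn)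
    refine ⟨⟨C + 1, by positivity, fun n hn => (hsup n hn).trans ?_⟩, ?_⟩
    · gcongr
      exact (lt_add_one C).le
    · refine squeeze_zero' (.of_forall fun n => Real.iSup_nonneg fun t => abs_nonneg _) ?_
        (tendsto_const_div_sqrt_natCast C)
      filter_upwards [eventually_ge_atTop 1] with n hn using hsup n hn
  · have hunif := tendstoUniformlyOn_rpow_mul_integral_sub_zetaMeanM hlam hη hγ hT hf hρhat hη₂
      one_half_lt_one
    simpa only [← Real.sqrt_eq_rpow, mul_sub] using tendsto_iSup_abs_of_tendstoUniformlyOn hunif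
  · simp only [integral_zetaP_eq_zetaMean Tarr f hν]
    exact tendsto_iSup_abs_of_tendstoUniformlyOn (tendstoUniformlyOn_zetaMean_sub_integral hlam hη
      hγ hT hf hρhat (isProbDensity_toReal_rnDeriv hν))

/-- Lemma `lem:admissible`.  With `ζ(t) = ∫₀ᵗ μ̂ₛ(f) ds`:
(i) if `ν` has a Lipschitz density `ψ`, then
`sup_t |√n ν(ζₙ(·,t)) − √n 𝔪(ζₙ(·,t))| → 0`, and indeed it is `O(n^{−1/2})`;
(ii) if `η > 1/2`, then `sup_t |√n ζ(t) − √n 𝔪(ζₙ(·,t))| → 0`;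
(iii) if `ν` is an arbitrary absolutely continuous probability measure, then
`sup_t |ν(ζₙ(·,t)) − ζ(t)| → 0`. -/
theorem statement17 {lam Astar : ℝ} (hlam : 1 < lam) (hA : 0 < Astar)
    {η : ℝ} (hη : η ∈ Set.Ioo (0 : ℝ) 1)
    (γ : ℝ → CM lam Astar) (hγ : HolderCurve η γ)
    (Tarr : ℕ → ℕ → CM lam Astar) (hT : ArrayApprox η γ Tarr)
    (f : Circle1 → ℝ) (hf : ∃ K : NNReal, LipschitzWith K f)
    (ρhat : ℝ → Circle1 → ℝ) (hρhat : ∀ t ∈ Set.Icc (0 : ℝ) 1, IsSRBDensity (γ t) (ρhat t)) :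
    (∀ ψ : Circle1 → ℝ, IsProbDensity ψ → (∃ K : NNReal, LipschitzWith K ψ) →
      (∃ C : ℝ, 0 < C ∧ ∀ n : ℕ, 1 ≤ n →
        (⨆ t : Set.Icc (0 : ℝ) 1,
          |Real.sqrt n * zetaMean Tarr f ψ n t - Real.sqrt n * zetaMeanM Tarr f n t|) ≤
          C / Real.sqrt n) ∧
      Tendsto (fun n : ℕ => ⨆ t : Set.Icc (0 : ℝ) 1,
          |Real.sqrt n * zetaMean Tarr f ψ n t - Real.sqrt n * zetaMeanM Tarr f n t|)
        atTop (𝓝 0)) ∧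
    (1/2 < η →
      Tendsto (fun n : ℕ => ⨆ t : Set.Icc (0 : ℝ) 1,
          |Real.sqrt n * (∫ s in (0:ℝ)..(t:ℝ), ∫ y : Circle1, f y * ρhat s y) -
            Real.sqrt n * zetaMeanM Tarr f n t|)
        atTop (𝓝 0)) ∧
    (∀ ν : Measure Circle1, IsProbabilityMeasure ν → ν ≪ volume →
      Tendsto (fun n : ℕ => ⨆ t : Set.Icc (0 : ℝ) 1,
          |(∫ y : Circle1, zetaP Tarr f n y t ∂ν) -
            ∫ s in (0:ℝ)..(t:ℝ), ∫ y : Circle1, f y * ρhat s y|)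
        atTop (𝓝 0)) := by
  obtain ⟨K, hK⟩ := hf
  exact statement17_general hlam hη.1 hγ hT hK.continuous hρhat
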